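/- In the transverse p-spin model with p ≥ 2, for every β > 0, J > 0 and b ≥ 0, setting α_p(N) = N!/((N−p)!·N^p), one has liminf_{N→∞} ( E[⟨R_N^p⟩⊗] − α_p(N)·Φ(pβb · E[⟨S_1^x⟩]) − (2/(βJ·N))·E[⟨U_N⟩] ) ≥ 0, where the Gibbs and disorder expectations inside the liminf are taken in the N-spin model. -/

import Mathlib

open Matrix MeasureTheory ProbabilityTheory
open scoped Kronecker

noncomputable section

abbrev Conf (N : ℕ) := Fin N → Fin 2

def Sz (N : ℕ) (j : Fin N) : Matrix (Conf N) (Conf N) ℂ :=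
  Matrix.diagonal fun σ => if σ j = 0 then 1 else -1

def Sx (N : ℕ) (j : Fin N) : Matrix (Conf N) (Conf N) ℂ :=
  Matrix.of fun σ τ => if τ = Function.update σ j (1 - σ j) then 1 else 0

/-- The product `S^z_{j_1} S^z_{j_2} ⋯ S^z_{j_p}` over an index set `s`. -/
def SzProd (N : ℕ) (s : Finset (Fin N)) : Matrix (Conf N) (Conf N) ℂ :=
  Matrix.diagonal fun σ => ∏ j ∈ s, (if σ j = 0 then (1 : ℂ) else -1)

/-- The zero-field `p`-spin Hamiltonian
`U_N = −√(p!/(2N^{p−1})) Σ_{j_1<⋯<j_p} g_{j_1⋯j_p} S^z_{j_1} ⋯ S^z_{j_p}`. -/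
def UNp (N p : ℕ) (g : Finset (Fin N) → ℝ) : Matrix (Conf N) (Conf N) ℂ :=
  (-(Real.sqrt ((Nat.factorial p : ℝ) / (2 * (N : ℝ) ^ (p - 1))))) •
    ∑ s : Finset (Fin N), if s.card = p then g s • SzProd N s else 0

/-- The transverse `p`-spin Hamiltonian `H_N = J·U_N − b·Σ_j S_j^x`. -/
def HNp (N p : ℕ) (J b : ℝ) (g : Finset (Fin N) → ℝ) : Matrix (Conf N) (Conf N) ℂ :=
  J • UNp N p g - b • ∑ j : Fin N, Sx N j

/-- Gibbs expectation (real part of the trace ratio). -/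
def gibbs {n : Type*} [Fintype n] [DecidableEq n] (β : ℝ) (H A : Matrix n n ℂ) : ℝ :=
  ((NormedSpace.exp ((-β) • H) * A).trace / (NormedSpace.exp ((-β) • H)).trace).re

/-- The replica-overlap operator `R_N = N⁻¹ Σ_j S_j^z ⊗ S_j^z` on `ℋ_N ⊗ ℋ_N`. -/
def RN (N : ℕ) : Matrix (Conf N × Conf N) (Conf N × Conf N) ℂ :=
  ((N : ℝ)⁻¹) • ∑ j : Fin N, (Sz N j) ⊗ₖ (Sz N j)

/-- The duplicated Hamiltonian `H_N ⊗ 1 + 1 ⊗ H_N`. -/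
def Hdup (N p : ℕ) (J b : ℝ) (g : Finset (Fin N) → ℝ) :
    Matrix (Conf N × Conf N) (Conf N × Conf N) ℂ :=
  (HNp N p J b g) ⊗ₖ (1 : Matrix (Conf N) (Conf N) ℂ)
    + (1 : Matrix (Conf N) (Conf N) ℂ) ⊗ₖ (HNp N p J b g)

/-- `α_p(N) = N!/((N−p)!·N^p)`. -/
def alphaP (N p : ℕ) : ℝ :=
  (Nat.factorial N : ℝ) / ((Nat.factorial (N - p) : ℝ) * (N : ℝ) ^ p)

/-- The index set `{1, …, p}` of the first `p` spins. -/
def firstP (N p : ℕ) : Finset (Fin N) := Finset.univ.filter fun j : Fin N => (j : ℕ) < p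

/-!
Write the Gibbs weight as `e^X` with `X = θ ∑ₛ xₛ S^z_s + h ∑ⱼ S^x_j`. Gaussian integration by
parts turns `E⟨U_N⟩` into a sum over the couplings `s` of `E[(S^z_s, S^z_s)] - E[⟨S^z_s⟩²]`, where
`(·, ·)` is the Duhamel inner product of `X`. Expanding `R_N^p` in monomials gives a sum of squares
of Gibbs means, and keeping only the monomials with distinct indices bounds `E⟨R_N^p⟩` below by
`p!/N^p ∑ₛ E[⟨S^z_s⟩²]`. These squares cancel in the combination of the theorem, and what remains
is to bound each `E[(S^z_s, S^z_s)]` below. The Falk–Bruch inequality does this in terms of the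
double commutator `[[X, S^z_s], S^z_s] = 4h ∑_{j ∈ s} S^x_j`; convexity of `Φ` moves the disorder
average inside `Φ`, and permutation symmetry of the spins replaces every `S^x_j` by `S^x_1`. There
are `N.choose p = α_p(N) N^p / p!` couplings, so the inequality already holds at each `N ≥ p`.
-/

section Hyperbolic

open Real Set

lemma monotoneOn_of_hasDerivAt_nonneg {f f' : ℝ → ℝ} {s : Set ℝ} (hs : Convex ℝ s)
    (hf : ∀ x ∈ s, HasDerivAt f (f' x) x) (hf' : ∀ x ∈ s, 0 ≤ f' x) : MonotoneOn f s :=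
  monotoneOn_of_hasDerivWithinAt_nonneg hs
    (fun x hx ↦ (hf x hx).continuousAt.continuousWithinAt)
    (fun x hx ↦ (hf x (interior_subset hx)).hasDerivWithinAt)
    (fun x hx ↦ hf' x (interior_subset hx))

lemma hasDerivAt_tanh (x : ℝ) : HasDerivAt tanh (1 - tanh x ^ 2) x := by
  rw [show tanh = fun y ↦ sinh y / cosh y from funext tanh_eq_sinh_div_cosh]
  refine ((hasDerivAt_sinh x).div (hasDerivAt_cosh x) (cosh_pos x).ne').congr_deriv ?_
  have := (cosh_pos x).ne'
  field_simp

lemma continuous_tanh : Continuous tanh :=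
  continuous_iff_continuousAt.2 fun x ↦ (hasDerivAt_tanh x).continuousAt

lemma tanh_nonneg {x : ℝ} (hx : 0 ≤ x) : 0 ≤ tanh x := by
  rw [tanh_eq_sinh_div_cosh]
  exact div_nonneg (sinh_nonneg_iff.2 hx) (cosh_pos x).le

lemma mul_tanh_nonneg (x : ℝ) : 0 ≤ x * tanh x := by
  rcases le_total 0 x with hx | hx
  · exact mul_nonneg hx (tanh_nonneg hx)
  · rw [← neg_mul_neg, ← tanh_neg]
    exact mul_nonneg (neg_nonneg.2 hx) (tanh_nonneg (neg_nonneg.2 hx))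

lemma tanh_le_self {x : ℝ} (hx : 0 ≤ x) : tanh x ≤ x := by
  have hmono : MonotoneOn (fun y ↦ y - tanh y) (Ici 0) :=
    monotoneOn_of_hasDerivAt_nonneg (convex_Ici 0)
      (fun y _ ↦ (hasDerivAt_id y).sub (hasDerivAt_tanh y)) (fun y _ ↦ by simp [sq_nonneg])
  simpa using hmono self_mem_Ici hx hx

lemma sub_cube_div_three_le_tanh {x : ℝ} (hx : 0 ≤ x) : x - x ^ 3 / 3 ≤ tanh x := by
  have hmono : MonotoneOn (fun y ↦ tanh y - (y - y ^ 3 / 3)) (Ici 0) :=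
    monotoneOn_of_hasDerivAt_nonneg (convex_Ici 0)
      (fun y _ ↦ (hasDerivAt_tanh y).sub ((hasDerivAt_id y).sub ((hasDerivAt_pow 3 y).div_const 3)))
      fun y hy ↦ by
        have : tanh y ^ 2 ≤ y ^ 2 := pow_le_pow_left₀ (tanh_nonneg hy) (tanh_le_self hy) 2
        simp only [Nat.cast_ofNat, Nat.add_one_sub_one]
        linarith
  simpa using hmono self_mem_Ici hx hx

lemma one_add_sq_div_two_le_cosh {x : ℝ} (hx : 0 ≤ x) : 1 + x ^ 2 / 2 ≤ cosh x := by
  have hmono : MonotoneOn (fun y ↦ cosh y - (1 + y ^ 2 / 2)) (Ici 0) :=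
    monotoneOn_of_hasDerivAt_nonneg (convex_Ici 0)
      (fun y _ ↦ (hasDerivAt_cosh y).sub (((hasDerivAt_pow 2 y).div_const 2).const_add 1))
      fun y hy ↦ by simpa using self_le_sinh_iff.2 hy
  simpa using hmono self_mem_Ici hx hx

lemma add_cube_div_six_le_sinh {x : ℝ} (hx : 0 ≤ x) : x + x ^ 3 / 6 ≤ sinh x := by
  have hmono : MonotoneOn (fun y ↦ sinh y - (y + y ^ 3 / 6)) (Ici 0) :=
    monotoneOn_of_hasDerivAt_nonneg (convex_Ici 0)
      (fun y _ ↦ (hasDerivAt_sinh y).sub ((hasDerivAt_id y).add ((hasDerivAt_pow 3 y).div_const 6)))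
      fun y hy ↦ by
        have := one_add_sq_div_two_le_cosh hy
        simp only [Nat.cast_ofNat, Nat.add_one_sub_one, sub_nonneg]
        linarith
  simpa using hmono self_mem_Ici hx hx

lemma two_mul_sq_le_sinh_sq_add_mul_tanh {x : ℝ} (hx : 0 ≤ x) :
    2 * x ^ 2 ≤ sinh x ^ 2 + x * tanh x := by
  have hsinh : (x + x ^ 3 / 6) ^ 2 ≤ sinh x ^ 2 :=
    pow_le_pow_left₀ (by positivity) (add_cube_div_six_le_sinh hx) 2
  have htanh : x * (x - x ^ 3 / 3) ≤ x * tanh x :=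
    mul_le_mul_of_nonneg_left (sub_cube_div_three_le_tanh hx) hx
  nlinarith [sq_nonneg (x ^ 3)]

lemma le_one_add_sq_mul_tanh {x : ℝ} (hx : 0 ≤ x) : x ≤ (1 + x ^ 2) * tanh x := by
  have hmono : MonotoneOn (fun y ↦ (1 + y ^ 2) * sinh y - y * cosh y) (Ici 0) :=
    monotoneOn_of_hasDerivAt_nonneg (f' := fun y ↦ y * sinh y + y ^ 2 * cosh y) (convex_Ici 0)
      (fun y _ ↦ ((((hasDerivAt_pow 2 y).const_add 1).mul (hasDerivAt_sinh y)).sub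
        ((hasDerivAt_id y).mul (hasDerivAt_cosh y))).congr_deriv (by simp only [id]; ring))
      fun y hy ↦ by
        have := mul_nonneg hy (sinh_nonneg_iff.2 hy)
        have := cosh_pos y
        positivity
  have h : x * cosh x ≤ (1 + x ^ 2) * sinh x := by simpa using hmono self_mem_Ici hx hx
  rwa [tanh_eq_sinh_div_cosh, ← mul_div_assoc, le_div_iff₀ (cosh_pos x)]

lemma sub_one_le_mul_tanh {x : ℝ} (hx : 0 ≤ x) : x - 1 ≤ x * tanh x := by
  have hexp : cosh x - sinh x ≤ 1 := by
    rw [cosh_sub_sinh]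
    exact exp_le_one_iff.2 (neg_nonpos.2 hx)
  rw [tanh_eq_sinh_div_cosh, ← mul_div_assoc, le_div_iff₀ (cosh_pos x)]
  nlinarith [self_le_sinh_iff.2 hx, sinh_lt_cosh x]

lemma exists_mul_tanh_eq {t : ℝ} (ht : 0 ≤ t) : ∃ r, 0 ≤ r ∧ r * tanh r = t := by
  have hcont : Continuous fun r ↦ r * tanh r := continuous_id.mul continuous_tanh
  have hR : 0 ≤ t + 1 := by linarith
  obtain ⟨r, hr, hrt⟩ := intermediate_value_Icc hR hcont.continuousOn
    ⟨by simpa using ht, by simpa using sub_one_le_mul_tanh hR⟩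
  exact ⟨r, hr.1, hrt⟩

lemma sinh_mul_cosh_sub_self_pos {x : ℝ} (hx : 0 < x) : 0 < sinh x * cosh x - x := by
  nlinarith [self_lt_sinh_iff.2 hx, one_le_cosh x]

/-- Minus the reciprocal of the slope at `x tanh x` of the function `x tanh x ↦ tanh x / x`. -/
def falkBruchWeight (x : ℝ) : ℝ := x ^ 2 + 2 * x ^ 3 / (sinh x * cosh x - x)

lemma falkBruchWeight_pos {x : ℝ} (hx : 0 < x) : 0 < falkBruchWeight x := by
  have := sinh_mul_cosh_sub_self_pos hx
  unfold falkBruchWeight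
  positivity

lemma hasDerivAt_falkBruchWeight {x : ℝ} (hx : 0 < x) :
    HasDerivAt falkBruchWeight (2 * x * cosh x ^ 2 *
      (sinh x ^ 2 + x * tanh x - 2 * x ^ 2) / (sinh x * cosh x - x) ^ 2) x := by
  have hne := (sinh_mul_cosh_sub_self_pos hx).ne'
  refine ((hasDerivAt_pow 2 x).add (((hasDerivAt_pow 3 x).const_mul 2).div
    (((hasDerivAt_sinh x).mul (hasDerivAt_cosh x)).sub (hasDerivAt_id x)) hne)).congr_deriv ?_
  have hcosh := (cosh_pos x).ne'
  simp only [Pi.mul_apply, id, Pi.sub_apply, tanh_eq_sinh_div_cosh]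
  simp only [Nat.cast_ofNat, Nat.add_one_sub_one, pow_one]
  field_simp
  linear_combination x ^ 2 * cosh_sq x

lemma monotoneOn_falkBruchWeight : MonotoneOn falkBruchWeight (Ioi 0) :=
  monotoneOn_of_hasDerivAt_nonneg (convex_Ioi 0) (fun _ ↦ hasDerivAt_falkBruchWeight)
    fun x (hx : 0 < x) ↦ by
      have := sub_nonneg.2 (two_mul_sq_le_sinh_sq_add_mul_tanh hx.le)
      positivity

lemma hasDerivAt_tanh_div_add_mul_tanh (κ : ℝ) {x : ℝ} (hx : 0 < x) :
    HasDerivAt (fun y ↦ tanh y / y + κ * (y * tanh y))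
      ((tanh x + x * (1 - tanh x ^ 2)) * (κ - (falkBruchWeight x)⁻¹)) x := by
  refine (((hasDerivAt_tanh x).div (hasDerivAt_id x) hx.ne').add
    (((hasDerivAt_id x).mul (hasDerivAt_tanh x)).const_mul κ)).congr_deriv ?_
  have hne := (sinh_mul_cosh_sub_self_pos hx).ne'
  have := sinh_pos_iff.2 hx
  have := cosh_pos x
  have hweight : falkBruchWeight x =
      x ^ 2 * (sinh x * cosh x + x) / (sinh x * cosh x - x) := by
    unfold falkBruchWeight
    field_simp
    ring
  have hsq : 1 - tanh x ^ 2 = (cosh x ^ 2)⁻¹ := by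
    rw [tanh_eq_sinh_div_cosh]
    field_simp
    linarith [cosh_sq x]
  rw [hweight, inv_div, hsq, tanh_eq_sinh_div_cosh]
  have : sinh x * cosh x + x ≠ 0 := by positivity
  simp only [id]
  field_simp
  ring

lemma tanh_div_add_mul_tanh_le {r x : ℝ} (hr : 0 < r) (hx : 0 < x) :
    tanh r / r + (falkBruchWeight r)⁻¹ * (r * tanh r) ≤
      tanh x / x + (falkBruchWeight r)⁻¹ * (x * tanh x) := by
  have hpos {y : ℝ} (hy : 0 < y) : 0 ≤ tanh y + y * (1 - tanh y ^ 2) := by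
    have : 0 ≤ 1 - tanh y ^ 2 := by
      nlinarith [tanh_lt_one y, tanh_nonneg hy.le]
    have := tanh_nonneg hy.le
    positivity
  rcases le_total x r with hxr | hrx
  · have hmono : MonotoneOn (fun y ↦ -(tanh y / y + (falkBruchWeight r)⁻¹ * (y * tanh y)))
        (Ioc 0 r) :=
      monotoneOn_of_hasDerivAt_nonneg (convex_Ioc 0 r)
        (fun y hy ↦ (hasDerivAt_tanh_div_add_mul_tanh _ hy.1).neg)
        fun y hy ↦ by
          have hinv : (falkBruchWeight r)⁻¹ ≤ (falkBruchWeight y)⁻¹ :=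
            inv_anti₀ (falkBruchWeight_pos hy.1) (monotoneOn_falkBruchWeight hy.1 hr hy.2)
          nlinarith [mul_nonneg (hpos hy.1) (sub_nonneg.2 hinv)]
    exact neg_le_neg_iff.1 (hmono ⟨hx, hxr⟩ ⟨hr, le_rfl⟩ hxr)
  · have hmono : MonotoneOn (fun y ↦ tanh y / y + (falkBruchWeight r)⁻¹ * (y * tanh y)) (Ici r) :=
      monotoneOn_of_hasDerivAt_nonneg (convex_Ici r)
        (fun y hy ↦ hasDerivAt_tanh_div_add_mul_tanh _ (hr.trans_le hy))
        fun y hy ↦ by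
          have hinv : (falkBruchWeight y)⁻¹ ≤ (falkBruchWeight r)⁻¹ :=
            inv_anti₀ (falkBruchWeight_pos hr)
              (monotoneOn_falkBruchWeight hr (hr.trans_le hy) hy)
          exact mul_nonneg (hpos (hr.trans_le hy)) (sub_nonneg.2 hinv)
    exact hmono self_mem_Ici hrx hrx

end Hyperbolic

/-- The Falk–Bruch function: `Φ 0 = 1` and `Φ (r tanh r) = tanh r / r` for `r > 0`. Its values on
the negative half-line are left free. -/
structure IsFalkBruch (Φ : ℝ → ℝ) : Prop where
  apply_zero : Φ 0 = 1
  apply_mul_tanh : ∀ r, 0 < r → Φ (r * Real.tanh r) = Real.tanh r / r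

namespace IsFalkBruch

open Real Set Filter Topology

variable {Φ : ℝ → ℝ} {t u x : ℝ}

lemma apply_mul_tanh_of_ne (hΦ : IsFalkBruch Φ) (hx : x ≠ 0) :
    Φ (x * tanh x) = tanh x / x := by
  rcases hx.lt_or_gt with hx | hx
  · have := hΦ.apply_mul_tanh (-x) (neg_pos.2 hx)
    rwa [tanh_neg, neg_mul_neg, neg_div_neg_eq] at this
  · exact hΦ.apply_mul_tanh x hx

lemma nonneg (hΦ : IsFalkBruch Φ) (hu : 0 ≤ u) : 0 ≤ Φ u := by
  obtain ⟨r, hr, rfl⟩ := exists_mul_tanh_eq hu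
  rcases hr.eq_or_lt with rfl | hr
  · simp [hΦ.apply_zero]
  · rw [hΦ.apply_mul_tanh r hr]
    exact div_nonneg (tanh_nonneg hr.le) hr.le

lemma le_one (hΦ : IsFalkBruch Φ) (hu : 0 ≤ u) : Φ u ≤ 1 := by
  obtain ⟨r, hr, rfl⟩ := exists_mul_tanh_eq hu
  rcases hr.eq_or_lt with rfl | hr
  · simp [hΦ.apply_zero]
  · rw [hΦ.apply_mul_tanh r hr]
    exact div_le_one_of_le₀ (tanh_le_self hr.le) hr.le

lemma one_sub_le (hΦ : IsFalkBruch Φ) (hu : 0 ≤ u) : 1 - u ≤ Φ u := by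
  obtain ⟨r, hr, rfl⟩ := exists_mul_tanh_eq hu
  rcases hr.eq_or_lt with rfl | hr
  · simp [hΦ.apply_zero]
  · rw [hΦ.apply_mul_tanh r hr, le_div_iff₀ hr]
    linarith [le_one_add_sq_mul_tanh hr.le]

lemma exists_supporting_line (hΦ : IsFalkBruch Φ) (ht : 0 ≤ t) :
    ∃ m, ∀ u, 0 ≤ u → Φ t + m * (u - t) ≤ Φ u := by
  obtain ⟨r, hr, rfl⟩ := exists_mul_tanh_eq ht
  rcases hr.eq_or_lt with rfl | hr
  · exact ⟨-1, fun u hu ↦ by simpa [hΦ.apply_zero, ← sub_eq_add_neg] using hΦ.one_sub_le hu⟩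
  refine ⟨-(falkBruchWeight r)⁻¹, fun u hu ↦ ?_⟩
  have hline (x : ℝ) (hx : 0 < x) :
      Φ (r * tanh r) + -(falkBruchWeight r)⁻¹ * (x * tanh x - r * tanh r) ≤ tanh x / x := by
    rw [hΦ.apply_mul_tanh r hr]
    linarith [tanh_div_add_mul_tanh_le hr hx]
  obtain ⟨x, hx, rfl⟩ := exists_mul_tanh_eq hu
  rcases hx.eq_or_lt with rfl | hx
  · -- The bound at `u = 0` is the limit of the bounds at `x tanh x` as `x ↓ 0`.
    rw [show Φ (0 * tanh 0) = 1 by rw [zero_mul, hΦ.apply_zero]]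
    have hcont : Continuous fun x ↦
        Φ (r * tanh r) + -(falkBruchWeight r)⁻¹ * (x * tanh x - r * tanh r) := by
      have := continuous_tanh
      fun_prop
    refine le_of_tendsto ((hcont.tendsto 0).mono_left (nhdsWithin_le_nhds (s := Ioi 0)))
      (eventually_mem_nhdsWithin.mono fun x (hx : 0 < x) ↦ (hline x hx).trans ?_)
    exact div_le_one_of_le₀ (tanh_le_self hx.le) hx.le
  · rw [hΦ.apply_mul_tanh x hx]
    exact hline x hx

lemma convexOn (hΦ : IsFalkBruch Φ) : ConvexOn ℝ (Ici 0) Φ := by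
  refine ⟨convex_Ici 0, fun x hx y hy a b ha hb hab ↦ ?_⟩
  obtain ⟨m, hm⟩ := hΦ.exists_supporting_line (convex_Ici 0 hx hy ha hb hab)
  have hx' := mul_le_mul_of_nonneg_left (hm x hx) ha
  have hy' := mul_le_mul_of_nonneg_left (hm y hy) hb
  obtain rfl : b = 1 - a := by linarith
  simp only [smul_eq_mul] at *
  linarith

lemma continuousOn (hΦ : IsFalkBruch Φ) : ContinuousOn Φ (Ici 0) := by
  intro u hu
  rcases (mem_Ici.1 hu).eq_or_lt with rfl | hu
  · have hlower : Tendsto (fun u : ℝ ↦ 1 - u) (𝓝[≥] 0) (𝓝 (1 - 0)) :=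
      tendsto_const_nhds.sub (tendsto_id.mono_left nhdsWithin_le_nhds)
    rw [ContinuousWithinAt, hΦ.apply_zero]
    exact tendsto_of_tendsto_of_tendsto_of_le_of_le' (by simpa using hlower) tendsto_const_nhds
      (eventually_mem_nhdsWithin.mono fun _ ↦ hΦ.one_sub_le)
      (eventually_mem_nhdsWithin.mono fun _ ↦ hΦ.le_one)
  · have hcont := hΦ.convexOn.continuousOn_interior
    rw [interior_Ici] at hcont
    exact (hcont.continuousAt (Ioi_mem_nhds hu)).continuousWithinAt

end IsFalkBruch

section SegmentIntegral

open Real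

lemma exp_sub_exp_eq_mul_tanh (a b : ℝ) :
    exp a - exp b = (exp a + exp b) * tanh ((a - b) / 2) := by
  have ha : exp a = exp ((a + b) / 2) * exp ((a - b) / 2) := by rw [← exp_add]; ring_nf
  have hb : exp b = exp ((a + b) / 2) * exp (-((a - b) / 2)) := by rw [← exp_add]; ring_nf
  rw [tanh_eq_sinh_div_cosh, sinh_eq, cosh_eq, ha, hb]
  field_simp

lemma integral_exp_segment_of_ne {a b : ℝ} (h : a ≠ b) :
    ∫ s in (0 : ℝ)..1, exp (s * a + (1 - s) * b) = (exp a - exp b) / (a - b) := by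
  have hab : a - b ≠ 0 := sub_ne_zero.2 h
  have hderiv (s : ℝ) : HasDerivAt (fun s ↦ exp (s * a + (1 - s) * b) / (a - b))
      (exp (s * a + (1 - s) * b)) s := by
    have hlin : HasDerivAt (fun s ↦ s * a + (1 - s) * b) (1 * a + -1 * b) s :=
      ((hasDerivAt_id s).mul_const a).add (((hasDerivAt_id s).const_sub 1).mul_const b)
    refine (hlin.exp.div_const (a - b)).congr_deriv ?_
    field_simp
    ring
  rw [intervalIntegral.integral_eq_sub_of_hasDerivAt (fun s _ ↦ hderiv s)
    (Continuous.intervalIntegrable (by fun_prop) _ _)]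
  simp only [one_mul, sub_self, zero_mul, add_zero, sub_zero, zero_add]
  ring

lemma IsFalkBruch.integral_exp_segment {Φ : ℝ → ℝ} (hΦ : IsFalkBruch Φ) (a b : ℝ) :
    ∫ s in (0 : ℝ)..1, exp (s * a + (1 - s) * b) =
      (exp a + exp b) / 2 * Φ ((a - b) / 2 * tanh ((a - b) / 2)) := by
  rcases eq_or_ne a b with rfl | h
  · simp [← add_mul, hΦ.apply_zero]
  · have hab : a - b ≠ 0 := sub_ne_zero.2 h
    rw [integral_exp_segment_of_ne h, hΦ.apply_mul_tanh_of_ne (by positivity),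
      exp_sub_exp_eq_mul_tanh]
    field_simp

lemma integral_exp_segment_nonneg (a b : ℝ) :
    0 ≤ ∫ s in (0 : ℝ)..1, exp (s * a + (1 - s) * b) :=
  intervalIntegral.integral_nonneg zero_le_one fun _ _ ↦ (exp_pos _).le

lemma integral_exp_segment_le (a b : ℝ) :
    ∫ s in (0 : ℝ)..1, exp (s * a + (1 - s) * b) ≤ (exp a + exp b) / 2 := by
  have hconvex (s : ℝ) (hs : s ∈ Set.Icc (0 : ℝ) 1) :
      exp (s * a + (1 - s) * b) ≤ s * exp a + (1 - s) * exp b :=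
    convexOn_exp.2 (Set.mem_univ a) (Set.mem_univ b) hs.1 (sub_nonneg.2 hs.2) (by ring)
  calc ∫ s in (0 : ℝ)..1, exp (s * a + (1 - s) * b)
      ≤ ∫ s in (0 : ℝ)..1, (s * exp a + (1 - s) * exp b) :=
        intervalIntegral.integral_mono_on zero_le_one
          (Continuous.intervalIntegrable (by fun_prop) _ _)
          (Continuous.intervalIntegrable (by fun_prop) _ _) hconvex
    _ = (exp a + exp b) / 2 := by
        simp only [sub_mul, one_mul]
        rw [intervalIntegral.integral_add, intervalIntegral.integral_sub]
        · simp only [intervalIntegral.integral_mul_const, integral_id, one_pow, ne_eq,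
            OfNat.ofNat_ne_zero, not_false_eq_true, zero_pow, sub_zero,
            intervalIntegral.integral_const, smul_eq_mul, one_mul]
          ring
        all_goals exact Continuous.intervalIntegrable (by fun_prop) _ _

end SegmentIntegral

section Duhamel

variable {𝔸 : Type*} [NormedRing 𝔸] [NormedAlgebra ℝ 𝔸] [CompleteSpace 𝔸]

open NormedSpace Filter Topology

lemma continuous_exp_of_real_algebra : Continuous (exp : 𝔸 → 𝔸) :=
  let _ : NormedAlgebra ℚ 𝔸 := NormedAlgebra.restrictScalars ℚ ℝ 𝔸
  exp_continuous

lemma exp_sub_exp_eq_integral (X Y : 𝔸) :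
    exp Y - exp X = ∫ s in (0 : ℝ)..1, exp (s • Y) * (Y - X) * exp ((1 - s) • X) := by
  have hcont : Continuous (exp : 𝔸 → 𝔸) := continuous_exp_of_real_algebra
  have hderiv (s : ℝ) : HasDerivAt (fun s : ℝ ↦ exp (s • Y) * exp ((1 - s) • X))
      (exp (s • Y) * (Y - X) * exp ((1 - s) • X)) s := by
    refine ((hasDerivAt_exp_smul_const (𝕂 := ℝ) Y s).mul
      ((hasDerivAt_exp_smul_const' (𝕂 := ℝ) X (1 - s)).scomp s
        ((hasDerivAt_id s).const_sub 1))).congr_deriv ?_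
    simp only [Function.comp, neg_smul, one_smul]
    noncomm_ring
  rw [intervalIntegral.integral_eq_sub_of_hasDerivAt (fun s _ ↦ hderiv s)
    (Continuous.intervalIntegrable (by fun_prop) _ _)]
  simp

lemma hasDerivAt_exp_add_smul (X A : 𝔸) :
    HasDerivAt (fun t : ℝ ↦ exp (X + t • A))
      (∫ s in (0 : ℝ)..1, exp (s • X) * A * exp ((1 - s) • X)) 0 := by
  have hcont : Continuous (exp : 𝔸 → 𝔸) := continuous_exp_of_real_algebra
  have hintegral : Continuous fun t : ℝ ↦
      ∫ s in (0 : ℝ)..1, exp (s • (X + t • A)) * A * exp ((1 - s) • X) := by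
    apply intervalIntegral.continuous_parametric_intervalIntegral_of_continuous'
    simp only [Function.uncurry_def]
    fun_prop
  rw [hasDerivAt_iff_tendsto_slope]
  have hlim := (hintegral.tendsto 0).mono_left (nhdsWithin_le_nhds (s := {0}ᶜ))
  simp only [zero_smul, add_zero] at hlim
  refine hlim.congr' (eventually_mem_nhdsWithin.mono fun t (ht : t ≠ 0) ↦ ?_)
  simp only [slope_def_module, zero_smul, add_zero, sub_zero]
  rw [exp_sub_exp_eq_integral X (X + t • A)]
  simp only [add_sub_cancel_left, mul_smul_comm, smul_mul_assoc]
  rw [intervalIntegral.integral_smul, smul_smul, inv_mul_cancel₀ ht, one_smul]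

lemma hasDerivAt_clm_exp_add_smul (L : 𝔸 →L[ℝ] ℝ) (X A : 𝔸) :
    HasDerivAt (fun t : ℝ ↦ L (exp (X + t • A)))
      (∫ s in (0 : ℝ)..1, L (exp (s • X) * A * exp ((1 - s) • X))) 0 := by
  have hcont : Continuous (exp : 𝔸 → 𝔸) := continuous_exp_of_real_algebra
  rw [L.intervalIntegral_comp_comm (Continuous.intervalIntegrable (by fun_prop) _ _)]
  exact L.hasFDerivAt.comp_hasDerivAt (0 : ℝ) (hasDerivAt_exp_add_smul X A)

end Duhamel

lemma trace_mul_im_eq_zero {n : Type*} [Fintype n] {A B : Matrix n n ℂ}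
    (hA : A.IsHermitian) (hB : B.IsHermitian) :
    (A * B).trace.im = 0 := by
  rw [← Complex.conj_eq_iff_im, starRingEnd_apply, ← trace_conjTranspose, conjTranspose_mul,
    hA.eq, hB.eq, trace_mul_comm]

section MatrixExponential

open NormedSpace
open scoped Matrix.Norms.Operator

variable {n m : Type*} [Fintype n] [DecidableEq n] [Fintype m] [DecidableEq m]

lemma continuous_matrix_exp : Continuous (exp : Matrix n n ℂ → Matrix n n ℂ) :=
  continuous_exp_of_real_algebra

lemma map_matrix_exp {F : Type*} [FunLike F (Matrix n n ℂ) (Matrix m m ℂ)]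
    [AlgHomClass F ℂ (Matrix n n ℂ) (Matrix m m ℂ)] (f : F) (X : Matrix n n ℂ) :
    f (exp X) = exp (f X) :=
  let _ : NormedAlgebra ℚ (Matrix n n ℂ) := NormedAlgebra.restrictScalars ℚ ℝ _
  map_exp f (LinearMap.continuous_of_finiteDimensional (AlgHomClass.toAlgHom f).toLinearMap) X

lemma exp_kronecker_one_add_one_kronecker (X : Matrix n n ℂ) (Y : Matrix m m ℂ) :
    exp (X ⊗ₖ (1 : Matrix m m ℂ) + (1 : Matrix n n ℂ) ⊗ₖ Y) = exp X ⊗ₖ exp Y := by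
  let left : Matrix n n ℂ →ₐ[ℂ] Matrix (n × m) (n × m) ℂ :=
    AlgHom.ofLinearMap ((kroneckerBilinear (R := ℂ) (α := ℂ)).flip (1 : Matrix m m ℂ))
      one_kronecker_one fun A B ↦ by
        change (A * B) ⊗ₖ 1 = A ⊗ₖ 1 * B ⊗ₖ 1
        rw [← mul_kronecker_mul, mul_one]
  let right : Matrix m m ℂ →ₐ[ℂ] Matrix (n × m) (n × m) ℂ :=
    AlgHom.ofLinearMap (kroneckerBilinear (R := ℂ) (1 : Matrix n n ℂ))
      one_kronecker_one fun A B ↦ by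
        change 1 ⊗ₖ (A * B) = 1 ⊗ₖ A * 1 ⊗ₖ B
        rw [← mul_kronecker_mul, mul_one]
  have hleft : exp (X ⊗ₖ (1 : Matrix m m ℂ)) = exp X ⊗ₖ (1 : Matrix m m ℂ) :=
    (map_matrix_exp left X).symm
  have hright : exp ((1 : Matrix n n ℂ) ⊗ₖ Y) = (1 : Matrix n n ℂ) ⊗ₖ exp Y :=
    (map_matrix_exp right Y).symm
  rw [Matrix.exp_add_of_commute, hleft, hright, ← mul_kronecker_mul, one_mul, mul_one]
  rw [Commute, SemiconjBy, ← mul_kronecker_mul, ← mul_kronecker_mul]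
  simp only [one_mul, mul_one]

lemma hasDerivAt_trace_exp_add_smul_mul (X A B : Matrix n n ℂ) :
    HasDerivAt (fun t : ℝ ↦ (exp (X + t • A) * B).trace.re)
      (∫ s in (0 : ℝ)..1, (exp (s • X) * A * exp ((1 - s) • X) * B).trace.re) 0 :=
  hasDerivAt_clm_exp_add_smul (LinearMap.toContinuousLinearMap
    (Complex.reLm ∘ₗ traceLinearMap n ℝ ℂ ∘ₗ LinearMap.mulRight ℝ B)) X A

end MatrixExponential

section GibbsMean

open NormedSpace

variable {n m : Type*} [Fintype n] [DecidableEq n] [Fintype m] [DecidableEq m]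
  {X A B : Matrix n n ℂ}

/-- The Gibbs mean `A ↦ Tr (e^X A) / Tr e^X` (real part), with the inverse temperature and the sign
of the Hamiltonian absorbed in `X`. -/
def gibbsMean (X : Matrix n n ℂ) : Matrix n n ℂ →ₗ[ℝ] ℝ where
  toFun A := ((exp X * A).trace / (exp X).trace).re
  map_add' A B := by simp [mul_add, add_div]
  map_smul' c A := by simp [mul_div_assoc]

/-- The Bogoliubov–Duhamel inner product `∫₀¹ Tr (e^{sX} A e^{(1-s)X} B) ds / Tr e^X`
(real parts). -/
def duhamelInner (X A B : Matrix n n ℂ) : ℝ :=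
  (∫ s in (0 : ℝ)..1, (exp (s • X) * A * exp ((1 - s) • X) * B).trace.re) / (exp X).trace.re

lemma gibbsMean_map {F : Type*} [FunLike F (Matrix n n ℂ) (Matrix m m ℂ)]
    [AlgHomClass F ℂ (Matrix n n ℂ) (Matrix m m ℂ)] (f : F)
    (hf : ∀ A, (f A).trace = A.trace) (X A : Matrix n n ℂ) :
    gibbsMean (f X) (f A) = gibbsMean X A := by
  simp only [gibbsMean, LinearMap.coe_mk, AddHom.coe_mk, ← map_matrix_exp, ← map_mul, hf]

lemma duhamelInner_map {F : Type*} [FunLike F (Matrix n n ℂ) (Matrix m m ℂ)]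
    [AlgHomClass F ℂ (Matrix n n ℂ) (Matrix m m ℂ)] (f : F)
    (hf : ∀ A, (f A).trace = A.trace) (X A B : Matrix n n ℂ) :
    duhamelInner (f X) (f A) (f B) = duhamelInner X A B := by
  have hsmul (c : ℝ) (M : Matrix n n ℂ) : f (c • M) = c • f M := by
    simpa using map_smul f (c : ℂ) M
  simp only [duhamelInner, ← hsmul, ← map_matrix_exp, ← map_mul, hf]

lemma trace_exp_im_eq_zero (hX : X.IsHermitian) : (exp X).trace.im = 0 := by
  simpa using trace_mul_im_eq_zero hX.exp isHermitian_one

lemma gibbsMean_eq_div (hX : X.IsHermitian) (A : Matrix n n ℂ) :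
    gibbsMean X A = (exp X * A).trace.re / (exp X).trace.re := by
  have hreal : (exp X).trace = ((exp X).trace.re : ℂ) :=
    Complex.ext rfl (by simp [trace_exp_im_eq_zero hX])
  change ((exp X * A).trace / (exp X).trace).re = _
  rw [hreal, Complex.div_ofReal_re, Complex.ofReal_re]

lemma gibbsMean_kronecker (hX : X.IsHermitian) (hA : A.IsHermitian) (Y B : Matrix m m ℂ) :
    gibbsMean (X ⊗ₖ (1 : Matrix m m ℂ) + (1 : Matrix n n ℂ) ⊗ₖ Y) (A ⊗ₖ B) =
      gibbsMean X A * gibbsMean Y B := by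
  have him : ((exp X * A).trace / (exp X).trace).im = 0 := by
    simp [Complex.div_im, trace_mul_im_eq_zero hX.exp hA, trace_exp_im_eq_zero hX]
  simp only [gibbsMean, LinearMap.coe_mk, AddHom.coe_mk, exp_kronecker_one_add_one_kronecker,
    ← mul_kronecker_mul, trace_kronecker, mul_div_mul_comm]
  rw [Complex.mul_re, him, zero_mul, sub_zero]

lemma exp_diagonal_ofReal (d : n → ℝ) :
    exp (diagonal fun i ↦ (d i : ℂ)) = diagonal fun i ↦ (Real.exp (d i) : ℂ) := by
  rw [Matrix.exp_diagonal, Pi.exp_def]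
  simp [← Complex.exp_eq_exp_ℂ]

lemma exists_eq_conj_diagonal (hX : X.IsHermitian) :
    ∃ (f : Matrix n n ℂ ≃⋆ₐ[ℂ] Matrix n n ℂ) (d : n → ℝ),
      (∀ A, (f A).trace = A.trace) ∧ f (diagonal fun i ↦ (d i : ℂ)) = X := by
  refine ⟨Unitary.conjStarAlgAut ℂ _ hX.eigenvectorUnitary, hX.eigenvalues, fun A ↦ ?_,
    hX.spectral_theorem.symm⟩
  rw [Unitary.conjStarAlgAut_apply, trace_mul_cycle, Unitary.coe_star_mul_self, one_mul]

lemma trace_exp_re_pos [Nonempty n] (hX : X.IsHermitian) : 0 < (exp X).trace.re := by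
  obtain ⟨f, d, hf, rfl⟩ := exists_eq_conj_diagonal hX
  rw [← map_matrix_exp, hf, exp_diagonal_ofReal, trace_diagonal, ← Complex.ofReal_sum,
    Complex.ofReal_re]
  exact Finset.sum_pos (fun i _ ↦ Real.exp_pos _) Finset.univ_nonempty

lemma gibbsMean_one [Nonempty n] (hX : X.IsHermitian) : gibbsMean X 1 = 1 := by
  rw [gibbsMean_eq_div hX, mul_one, div_self (trace_exp_re_pos hX).ne']

lemma continuousOn_gibbsMean [Nonempty n] (A : Matrix n n ℂ) :
    ContinuousOn (fun X ↦ gibbsMean X A) {X | X.IsHermitian} := by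
  have := continuous_matrix_exp (n := n)
  have hquot : ContinuousOn (fun X ↦ (exp X * A).trace.re / (exp X).trace.re)
      {X | X.IsHermitian} :=
    ContinuousOn.div (by fun_prop) (by fun_prop) fun X hX ↦ (trace_exp_re_pos hX).ne'
  exact hquot.congr fun X hX ↦ gibbsMean_eq_div hX A

lemma continuousOn_duhamelInner [Nonempty n] (A B : Matrix n n ℂ) :
    ContinuousOn (fun X ↦ duhamelInner X A B) {X | X.IsHermitian} := by
  have := continuous_matrix_exp (n := n)
  refine ContinuousOn.div (Continuous.continuousOn ?_) (by fun_prop)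
    fun X hX ↦ (trace_exp_re_pos hX).ne'
  apply intervalIntegral.continuous_parametric_intervalIntegral_of_continuous'
  simp only [Function.uncurry_def]
  fun_prop

lemma duhamelInner_one (hX : X.IsHermitian) (A : Matrix n n ℂ) :
    duhamelInner X A 1 = gibbsMean X A := by
  have hcycle (s : ℝ) :
      (exp (s • X) * A * exp ((1 - s) • X) * 1).trace = (exp X * A).trace := by
    rw [mul_one, trace_mul_cycle, ← Matrix.exp_add_of_commute _ _
      (((Commute.refl X).smul_left _).smul_right _), ← add_smul, sub_add_cancel, one_smul]
  simp only [duhamelInner, hcycle, gibbsMean_eq_div hX]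
  simp

lemma hasDerivAt_gibbsMean_add_smul [Nonempty n] (hX : X.IsHermitian) (hA : A.IsHermitian)
    (B : Matrix n n ℂ) :
    HasDerivAt (fun t : ℝ ↦ gibbsMean (X + t • A) B)
      (duhamelInner X A B - gibbsMean X A * gibbsMean X B) 0 := by
  have hquot : (fun t : ℝ ↦ gibbsMean (X + t • A) B) =
      fun t : ℝ ↦ (exp (X + t • A) * B).trace.re / (exp (X + t • A) * 1).trace.re := by
    funext t
    rw [gibbsMean_eq_div (hX.add (hA.smul (.all t))), mul_one]
  have hpos := trace_exp_re_pos hX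
  have hnum := hasDerivAt_trace_exp_add_smul_mul X A B
  have hden := hasDerivAt_trace_exp_add_smul_mul X A 1
  rw [hquot, ← duhamelInner_one hX, gibbsMean_eq_div hX]
  refine (hnum.div hden (by simpa using hpos.ne')).congr_deriv ?_
  simp only [duhamelInner, zero_smul, add_zero, mul_one]
  field_simp

end GibbsMean

lemma mul_apply_of_isHermitian {n : Type*} {A : Matrix n n ℂ} (hA : A.IsHermitian)
    (i j : n) : A i j * A j i = (Complex.normSq (A i j) : ℂ) := by
  rw [← hA.apply j i]
  exact Complex.mul_conj _

lemma sum_sum_mul_symmetrize {n : Type*} [Fintype n] {c : n → n → ℝ}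
    (hc : ∀ i j, c i j = c j i) (f : n → n → ℝ) :
    ∑ i, ∑ j, c i j * f i j = ∑ i, ∑ j, c i j * ((f i j + f j i) / 2) := by
  have hswap : ∑ i, ∑ j, c i j * f i j = ∑ i, ∑ j, c i j * f j i := by
    rw [Finset.sum_comm]
    simp only [hc]
  simp only [mul_div_assoc', mul_add, ← Finset.sum_div, Finset.sum_add_distrib]
  linarith

section Spectral

open NormedSpace

variable {n : Type*} [Fintype n] [DecidableEq n] {X A : Matrix n n ℂ}

lemma trace_diagonal_mul_self_re (hA : A.IsHermitian) (e : n → ℝ) :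
    (diagonal (fun i ↦ (e i : ℂ)) * (A * A)).trace.re =
      ∑ i, ∑ j, Complex.normSq (A i j) * e i := by
  have hdiag (i : n) : (A * A) i i = ((∑ j, Complex.normSq (A i j) : ℝ) : ℂ) := by
    simp only [mul_apply, mul_apply_of_isHermitian hA, ← Complex.ofReal_sum]
  simp only [trace, diag_apply, diagonal_mul, hdiag, ← Complex.ofReal_sum, ← Complex.ofReal_mul,
    Complex.ofReal_re, Finset.mul_sum, mul_comm]

lemma trace_diagonal_mul_lie_lie_re (hA : A.IsHermitian) (e d : n → ℝ) :
    (diagonal (fun i ↦ (e i : ℂ)) * ⁅⁅diagonal (fun i ↦ (d i : ℂ)), A⁆, A⁆).trace.re =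
      ∑ i, ∑ j, Complex.normSq (A i j) * (2 * e i * (d i - d j)) := by
  have hlie (i j : n) : ⁅diagonal (fun i ↦ (d i : ℂ)), A⁆ i j = ((d i - d j : ℝ) : ℂ) * A i j := by
    rw [Ring.lie_def, Matrix.sub_apply, diagonal_mul, mul_diagonal]
    push_cast
    ring
  have hlie_lie (i : n) : ⁅⁅diagonal (fun i ↦ (d i : ℂ)), A⁆, A⁆ i i =
      ((∑ j, Complex.normSq (A i j) * (2 * (d i - d j)) : ℝ) : ℂ) := by
    rw [Ring.lie_def, Matrix.sub_apply, mul_apply, mul_apply, ← Finset.sum_sub_distrib]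
    push_cast
    refine Finset.sum_congr rfl fun j _ ↦ ?_
    rw [hlie, hlie, ← mul_apply_of_isHermitian hA]
    push_cast
    ring
  simp only [trace, diag_apply, diagonal_mul, hlie_lie, ← Complex.ofReal_sum, ← Complex.ofReal_mul,
    Complex.ofReal_re, Finset.mul_sum]
  exact Finset.sum_congr rfl fun i _ ↦ Finset.sum_congr rfl fun j _ ↦ by ring

lemma trace_diagonal_mul_mul_diagonal_mul_re (hA : A.IsHermitian) (e f : n → ℝ) :
    (diagonal (fun i ↦ (e i : ℂ)) * A * diagonal (fun i ↦ (f i : ℂ)) * A).trace.re =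
      ∑ i, ∑ j, Complex.normSq (A i j) * (e i * f j) := by
  rw [trace, Complex.re_sum]
  refine Finset.sum_congr rfl fun i _ ↦ ?_
  rw [diag_apply, mul_apply, Complex.re_sum]
  refine Finset.sum_congr rfl fun j _ ↦ ?_
  rw [mul_diagonal, diagonal_mul, ← Complex.ofReal_re (_ * _)]
  push_cast
  rw [← mul_apply_of_isHermitian hA]
  ring_nf

lemma integral_trace_exp_diagonal (hA : A.IsHermitian) (d : n → ℝ) :
    ∫ s in (0 : ℝ)..1, (exp (s • diagonal fun i ↦ (d i : ℂ)) * A *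
      exp ((1 - s) • diagonal fun i ↦ (d i : ℂ)) * A).trace.re =
    ∑ i, ∑ j, Complex.normSq (A i j) *
      ∫ s in (0 : ℝ)..1, Real.exp (s * d i + (1 - s) * d j) := by
  have hexp (s : ℝ) : exp (s • diagonal fun i ↦ (d i : ℂ)) =
      diagonal fun i ↦ (Real.exp (s * d i) : ℂ) := by
    rw [← exp_diagonal_ofReal (fun i ↦ s * d i), ← diagonal_smul]
    congr 2
    ext i
    simp
  simp only [hexp, trace_diagonal_mul_mul_diagonal_mul_re hA, ← Real.exp_add]
  rw [intervalIntegral.integral_finsetSum fun i _ ↦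
    Continuous.intervalIntegrable (by fun_prop) _ _]
  refine Finset.sum_congr rfl fun i _ ↦ ?_
  rw [intervalIntegral.integral_finsetSum fun j _ ↦
    Continuous.intervalIntegrable (by fun_prop) _ _]
  simp only [intervalIntegral.integral_const_mul]

/-- In an eigenbasis of `X` with eigenvalues `d`, the weights are `c i j = |A i j|² / Tr e^X`. -/
lemma exists_spectral_weights (hX : X.IsHermitian) (hA : A.IsHermitian) :
    ∃ (d : n → ℝ) (c : n → n → ℝ), (∀ i j, 0 ≤ c i j) ∧
      gibbsMean X (A * A) = ∑ i, ∑ j, c i j * ((Real.exp (d i) + Real.exp (d j)) / 2) ∧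
      gibbsMean X ⁅⁅X, A⁆, A⁆ =
        ∑ i, ∑ j, c i j * ((Real.exp (d i) - Real.exp (d j)) * (d i - d j)) ∧
      duhamelInner X A A =
        ∑ i, ∑ j, c i j * ∫ s in (0 : ℝ)..1, Real.exp (s * d i + (1 - s) * d j) := by
  obtain ⟨f, d, hf, rfl⟩ := exists_eq_conj_diagonal hX
  obtain ⟨A, rfl⟩ : ∃ B, f B = A := f.surjective A
  set D : Matrix n n ℂ := diagonal fun i ↦ (d i : ℂ)
  replace hA : A.IsHermitian :=
    EquivLike.injective f (by rw [← star_eq_conjTranspose, map_star]; exact hA)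
  have hDherm : D.IsHermitian := isHermitian_diagonal_of_self_adjoint _ (by ext; simp)
  have hsymm (i j : n) : Complex.normSq (A i j) = Complex.normSq (A j i) := by
    rw [← hA.apply, Complex.star_def, Complex.normSq_conj]
  obtain ⟨Z, hZ⟩ : ∃ Z, Z = (exp D).trace.re := ⟨_, rfl⟩
  have hZnonneg : 0 ≤ Z := by
    rw [hZ, exp_diagonal_ofReal, trace_diagonal, ← Complex.ofReal_sum, Complex.ofReal_re]
    exact Finset.sum_nonneg fun i _ ↦ (Real.exp_pos _).le
  refine ⟨d, fun i j ↦ Complex.normSq (A i j) / Z,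
    fun i j ↦ div_nonneg (Complex.normSq_nonneg _) hZnonneg, ?_, ?_, ?_⟩
  · rw [← map_mul, gibbsMean_map f hf, gibbsMean_eq_div hDherm, ← hZ, exp_diagonal_ofReal,
      trace_diagonal_mul_self_re hA, sum_sum_mul_symmetrize hsymm]
    simp only [Finset.sum_div, mul_div_right_comm _ _ Z]
  · have hlie : ⁅⁅f D, f A⁆, f A⁆ = f ⁅⁅D, A⁆, A⁆ := by simp [Ring.lie_def]
    rw [hlie, gibbsMean_map f hf, gibbsMean_eq_div hDherm, ← hZ, exp_diagonal_ofReal,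
      trace_diagonal_mul_lie_lie_re hA, sum_sum_mul_symmetrize hsymm]
    simp only [Finset.sum_div, mul_div_right_comm _ _ Z]
    exact Finset.sum_congr rfl fun i _ ↦ Finset.sum_congr rfl fun j _ ↦ by ring
  · rw [duhamelInner_map f hf, duhamelInner, integral_trace_exp_diagonal hA, ← hZ]
    simp only [Finset.sum_div, mul_div_right_comm _ _ Z]

lemma gibbsMean_mul_self_nonneg (hX : X.IsHermitian) (hA : A.IsHermitian) :
    0 ≤ gibbsMean X (A * A) := by
  obtain ⟨d, c, hc, h, -, -⟩ := exists_spectral_weights hX hA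
  rw [h]
  exact Finset.sum_nonneg fun i _ ↦ Finset.sum_nonneg fun j _ ↦ mul_nonneg (hc i j) (by positivity)

lemma sq_gibbsMean_le [Nonempty n] (hX : X.IsHermitian) (hA : A.IsHermitian) :
    gibbsMean X A ^ 2 ≤ gibbsMean X (A * A) := by
  set a := gibbsMean X A with ha
  have hvar := gibbsMean_mul_self_nonneg hX
    (hA.sub (isHermitian_one.smul (IsSelfAdjoint.all a)))
  have hexpand : (A - a • 1) * (A - a • 1) = A * A - (2 * a) • A + (a * a) • 1 := by
    simp only [sub_mul, mul_sub, smul_mul_assoc, mul_smul_comm, one_mul, mul_one]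
    module
  rw [hexpand, map_add, map_sub, map_smul, map_smul, gibbsMean_one hX, ← ha] at hvar
  simp only [smul_eq_mul] at hvar
  linarith

lemma abs_gibbsMean_le_one [Nonempty n] (hX : X.IsHermitian) (hA : A.IsHermitian)
    (hAA : A * A = 1) : |gibbsMean X A| ≤ 1 := by
  have h := sq_gibbsMean_le hX hA
  rwa [hAA, gibbsMean_one hX, sq_le_one_iff_abs_le_one] at h

lemma gibbsMean_lie_lie_nonneg (hX : X.IsHermitian) (hA : A.IsHermitian) :
    0 ≤ gibbsMean X ⁅⁅X, A⁆, A⁆ := by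
  obtain ⟨d, c, hc, -, h, -⟩ := exists_spectral_weights hX hA
  have hmono (a b : ℝ) : 0 ≤ (Real.exp a - Real.exp b) * (a - b) :=
    (Real.exp_monotone.monovary monotone_id).sub_mul_sub_nonneg b a
  rw [h]
  exact Finset.sum_nonneg fun i _ ↦ Finset.sum_nonneg fun j _ ↦ mul_nonneg (hc i j) (hmono _ _)

lemma duhamelInner_self_nonneg (hX : X.IsHermitian) (hA : A.IsHermitian) :
    0 ≤ duhamelInner X A A := by
  obtain ⟨d, c, hc, -, -, h⟩ := exists_spectral_weights hX hA
  rw [h]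
  exact Finset.sum_nonneg fun i _ ↦ Finset.sum_nonneg fun j _ ↦
    mul_nonneg (hc i j) (integral_exp_segment_nonneg _ _)

lemma duhamelInner_self_le (hX : X.IsHermitian) (hA : A.IsHermitian) :
    duhamelInner X A A ≤ gibbsMean X (A * A) := by
  obtain ⟨d, c, hc, hsq, -, h⟩ := exists_spectral_weights hX hA
  rw [h, hsq]
  exact Finset.sum_le_sum fun i _ ↦ Finset.sum_le_sum fun j _ ↦
    mul_le_mul_of_nonneg_left (integral_exp_segment_le _ _) (hc i j)

lemma IsFalkBruch.gibbsMean_mul_apply_le_duhamelInner {Φ : ℝ → ℝ} (hΦ : IsFalkBruch Φ)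
    (hX : X.IsHermitian) (hA : A.IsHermitian) :
    gibbsMean X (A * A) * Φ (gibbsMean X ⁅⁅X, A⁆, A⁆ / (4 * gibbsMean X (A * A))) ≤
      duhamelInner X A A := by
  have hnonneg := duhamelInner_self_nonneg hX hA
  obtain ⟨d, c, hc, hsq, hlie, hD⟩ := exists_spectral_weights hX hA
  rcases (gibbsMean_mul_self_nonneg hX hA).eq_or_lt with hzero | hpos
  · rwa [← hzero, zero_mul]
  let x (ij : n × n) : ℝ := (d ij.1 - d ij.2) / 2
  let w (ij : n × n) : ℝ := c ij.1 ij.2 * ((Real.exp (d ij.1) + Real.exp (d ij.2)) / 2)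
  have hw (ij : n × n) : 0 ≤ w ij := mul_nonneg (hc _ _) (by positivity)
  have hsq : gibbsMean X (A * A) = ∑ ij, w ij := by rw [hsq, Fintype.sum_prod_type]
  have hlie : gibbsMean X ⁅⁅X, A⁆, A⁆ / 4 = ∑ ij, w ij * (x ij * Real.tanh (x ij)) := by
    rw [hlie, Fintype.sum_prod_type]
    simp only [Finset.sum_div, exp_sub_exp_eq_mul_tanh, w, x]
    exact Finset.sum_congr rfl fun i _ ↦ Finset.sum_congr rfl fun j _ ↦ by ring
  have hD : duhamelInner X A A = ∑ ij, w ij * Φ (x ij * Real.tanh (x ij)) := by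
    rw [hD, Fintype.sum_prod_type]
    simp only [hΦ.integral_exp_segment, w, x, mul_assoc]
  have hjensen := hΦ.convexOn.map_centerMass_le (t := Finset.univ) (w := w)
    (p := fun ij ↦ x ij * Real.tanh (x ij)) (fun ij _ ↦ hw ij) (hsq ▸ hpos)
    fun ij _ ↦ mul_tanh_nonneg _
  simp only [Finset.centerMass, smul_eq_mul, Function.comp_apply, ← hsq, ← hlie, ← hD] at hjensen
  rw [← div_div, div_eq_inv_mul]
  calc _ ≤ gibbsMean X (A * A) * ((gibbsMean X (A * A))⁻¹ * duhamelInner X A A) :=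
        mul_le_mul_of_nonneg_left hjensen hpos.le
    _ = duhamelInner X A A := mul_inv_cancel_left₀ hpos.ne' _

end Spectral

section GaussianIntegrationByParts

open scoped NNReal

lemma hasDerivAt_gaussianPDFReal (m : ℝ) (v : ℝ≥0) (x : ℝ) :
    HasDerivAt (gaussianPDFReal m v) (-((x - m) / v * gaussianPDFReal m v x)) x := by
  have hexponent : HasDerivAt (fun y : ℝ ↦ -(y - m) ^ 2 / (2 * v)) (-((x - m) / v)) x := by
    refine ((((hasDerivAt_id x).sub_const m).pow 2).neg.div_const _).congr_deriv ?_
    simp only [id_eq]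
    ring
  rw [gaussianPDFReal_def]
  exact (hexponent.exp.const_mul _).congr_deriv (by ring)

lemma integrable_gaussianReal_iff {m : ℝ} {v : ℝ≥0} (hv : v ≠ 0) (f : ℝ → ℝ) :
    Integrable f (gaussianReal m v) ↔ Integrable fun x ↦ gaussianPDFReal m v x * f x := by
  rw [gaussianReal_of_var_ne_zero m hv, integrable_withDensity_iff_integrable_smul'
    (measurable_gaussianPDF m v) (.of_forall fun x ↦ gaussianPDF_lt_top)]
  simp only [toReal_gaussianPDF, smul_eq_mul]

lemma integral_sub_mul_gaussianReal {m : ℝ} {v : ℝ≥0} (hv : v ≠ 0) {F F' : ℝ → ℝ}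
    (hF : ∀ t, HasDerivAt F (F' t) t) (hint : Integrable F (gaussianReal m v))
    (hmul : Integrable (fun t ↦ (t - m) * F t) (gaussianReal m v))
    (hderiv : Integrable F' (gaussianReal m v)) :
    ∫ t, (t - m) * F t ∂gaussianReal m v = v * ∫ t, F' t ∂gaussianReal m v := by
  have hv' : (v : ℝ) ≠ 0 := NNReal.coe_ne_zero.mpr hv
  rw [integrable_gaussianReal_iff hv] at hint hmul hderiv
  have hparts := integral_mul_deriv_eq_deriv_mul_of_integrable (fun x _ ↦ hF x)
    (fun x _ ↦ hasDerivAt_gaussianPDFReal m v x)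
    ((hmul.const_mul (-(v : ℝ)⁻¹)).congr (.of_forall fun x ↦ by simp only [Pi.mul_apply]; ring))
    (hderiv.congr (.of_forall fun x ↦ mul_comm _ _))
    (hint.congr (.of_forall fun x ↦ mul_comm _ _))
  simp only [integral_gaussianReal_eq_integral_smul hv, smul_eq_mul]
  calc ∫ x, gaussianPDFReal m v x * ((x - m) * F x)
      = -(v * ∫ x, F x * -((x - m) / v * gaussianPDFReal m v x)) := by
        rw [← integral_const_mul, ← integral_neg]
        congr 1 with x
        field_simp
    _ = v * ∫ x, gaussianPDFReal m v x * F' x := by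
        rw [hparts, mul_neg, neg_neg]
        simp only [mul_comm]

variable {ι : Type*} [Fintype ι] [DecidableEq ι]

lemma measurePreserving_update {α : ι → Type*} [∀ i, MeasurableSpace (α i)]
    (ν : ∀ i, Measure (α i)) [∀ i, IsProbabilityMeasure (ν i)] (i : ι) :
    MeasurePreserving (fun q : (∀ i, α i) × α i ↦ Function.update q.1 i q.2)
      ((Measure.pi ν).prod (ν i)) (Measure.pi ν) := by
  have hmeas : Measurable fun q : (∀ i, α i) × α i ↦ Function.update q.1 i q.2 := by
    refine measurable_pi_iff.mpr fun j ↦ ?_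
    obtain rfl | hj := eq_or_ne j i
    · simpa using measurable_snd
    · simp only [Function.update_of_ne hj]
      fun_prop
  refine ⟨hmeas, (Measure.pi_eq fun s hs ↦ ?_).symm⟩
  have hpreimage : (fun q : (∀ i, α i) × α i ↦ Function.update q.1 i q.2) ⁻¹' Set.univ.pi s =
      Set.univ.pi (Function.update s i Set.univ) ×ˢ s i := by
    ext ⟨x, t⟩
    rw [Set.mem_preimage, Set.update_mem_pi_iff, Set.mem_prod]
    simp [Set.mem_pi, Function.forall_update_iff s fun j u ↦ x j ∈ u]
  rw [Measure.map_apply hmeas (.univ_pi hs), hpreimage, Measure.prod_prod, Measure.pi_pi,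
    ← Finset.prod_erase_mul _ (fun j ↦ ν j (s j)) (Finset.mem_univ i),
    ← Finset.prod_erase_mul _ _ (Finset.mem_univ i), Function.update_self, measure_univ, mul_one]
  congr 1
  refine Finset.prod_congr rfl fun j hj ↦ ?_
  rw [Function.update_of_ne (Finset.ne_of_mem_erase hj)]

/-- The map `update` leaves the product law invariant, so it reduces the claim to the
one-dimensional one on the fibres `t ↦ update x i t`. -/
lemma integral_sub_mul_pi_gaussianReal (m : ι → ℝ) (v : ι → ℝ≥0) {i : ι} (hv : v i ≠ 0)
    {F F' : (ι → ℝ) → ℝ}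
    (hF : ∀ x, HasDerivAt (fun t ↦ F (Function.update x i t)) (F' x) (x i))
    (hint : Integrable F (Measure.pi fun i ↦ gaussianReal (m i) (v i)))
    (hmul : Integrable (fun x ↦ (x i - m i) * F x) (Measure.pi fun i ↦ gaussianReal (m i) (v i)))
    (hderiv : Integrable F' (Measure.pi fun i ↦ gaussianReal (m i) (v i))) :
    ∫ x, (x i - m i) * F x ∂Measure.pi (fun i ↦ gaussianReal (m i) (v i)) =
      v i * ∫ x, F' x ∂Measure.pi (fun i ↦ gaussianReal (m i) (v i)) := by
  set ν := Measure.pi fun i ↦ gaussianReal (m i) (v i)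
  have hupdate : MeasurePreserving _ (ν.prod (gaussianReal (m i) (v i))) ν :=
    measurePreserving_update (fun i ↦ gaussianReal (m i) (v i)) i
  have hfiber {f : (ι → ℝ) → ℝ} (hf : Integrable f ν) :
      ∫ x, f x ∂ν = ∫ x, ∫ t, f (Function.update x i t) ∂gaussianReal (m i) (v i) ∂ν := by
    have hcomp : ∫ q, f (Function.update q.1 i q.2) ∂ν.prod (gaussianReal (m i) (v i)) =
        ∫ x, f x ∂ν := by
      rw [← integral_map hupdate.measurable.aemeasurable
        (hupdate.map_eq.symm ▸ hf.aestronglyMeasurable), hupdate.map_eq]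
    exact hcomp.symm.trans (integral_prod _ (hupdate.integrable_comp_of_integrable hf))
  rw [hfiber hmul, hfiber hderiv, ← integral_const_mul]
  refine integral_congr_ae ?_
  filter_upwards [(hupdate.integrable_comp_of_integrable hint).prod_right_ae,
    (hupdate.integrable_comp_of_integrable hmul).prod_right_ae,
    (hupdate.integrable_comp_of_integrable hderiv).prod_right_ae] with x hx hxmul hxderiv
  simp only [Function.comp_apply, Function.update_self] at hx hxmul hxderiv ⊢
  exact integral_sub_mul_gaussianReal hv
    (fun t ↦ by simpa using hF (Function.update x i t)) hx hxmul hxderiv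

end GaussianIntegrationByParts

lemma sum_embedding_map {α M : Type*} [Fintype α] [AddCommMonoid M] {p : ℕ}
    (F : {s : Finset α // s.card = p} → M) :
    ∑ f : Fin p ↪ α, F ⟨Finset.univ.map f, by simp⟩ = p.factorial • ∑ s, F s := by
  classical
  have hfiber (s : {s : Finset α // s.card = p}) :
      (Finset.univ.filter fun f : Fin p ↪ α ↦ (⟨Finset.univ.map f, by simp⟩ :
        {s : Finset α // s.card = p}) = s).card = p.factorial := by
    have hcard : Fintype.card (Fin p ≃ s.1) = p.factorial := by
      rw [Fintype.card_equiv (s.1.equivFinOfCardEq s.2).symm, Fintype.card_fin]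
    rw [← hcard, ← Finset.card_univ]
    refine (Finset.card_bij (fun e _ ↦ e.toEmbedding.trans (.subtype (· ∈ s.1))) (fun e _ ↦ ?_)
      (fun e _ e' _ h ↦ ?_) fun f hf ↦ ?_).symm
    · simp [Subtype.ext_iff, ← Finset.map_map, Finset.attach_map_val]
    · ext i
      exact DFunLike.congr_fun h i
    · obtain rfl := (Finset.mem_filter.1 hf).2
      exact ⟨.ofBijective (fun i ↦ ⟨f i, by simp⟩) ⟨fun i j h ↦ by simpa using h,
        fun ⟨a, ha⟩ ↦ by simpa using ha⟩, Finset.mem_univ _, rfl⟩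
  rw [← Finset.sum_fiberwise' _ _ F, Finset.smul_sum]
  simp only [Finset.sum_const, hfiber]

lemma lie_lie_of_mul_self_eq_one_of_anticommute {R : Type*} [Ring R] {A S : R} (hS : S * S = 1)
    (hSA : S * A = -(A * S)) : ⁅⁅A, S⁆, S⁆ = (4 : ℕ) • A := by
  have hASS : A * S * S = A := by rw [mul_assoc, hS, mul_one]
  simp only [Ring.lie_def, hSA, sub_neg_eq_add, add_mul, mul_add, ← mul_assoc, hASS,
    neg_mul, sub_neg_eq_add]
  abel

section PSpin

attribute [local instance] LieRing.ofAssociativeRing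

variable {N p : ℕ} {ι : Type*} [Fintype ι]

/-- The monomial `∏ i, S^z_{f i}`, where `f` may repeat indices. -/
def spinMonomial (f : ι → Fin N) : Matrix (Conf N) (Conf N) ℂ :=
  diagonal fun σ ↦ ∏ i, if σ (f i) = 0 then 1 else -1

lemma isHermitian_spinMonomial (f : ι → Fin N) : (spinMonomial f).IsHermitian := by
  refine isHermitian_diagonal_of_self_adjoint _ (funext fun σ ↦ ?_)
  simp [apply_ite]

lemma spinMonomial_mul_self (f : ι → Fin N) : spinMonomial f * spinMonomial f = 1 := by
  rw [spinMonomial, diagonal_mul_diagonal, ← diagonal_one]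
  congr 1
  funext σ
  rw [← Finset.prod_mul_distrib]
  exact Finset.prod_eq_one fun i _ ↦ by split_ifs <;> norm_num

lemma spinMonomial_embedding (f : ι ↪ Fin N) : spinMonomial f = SzProd N (Finset.univ.map f) := by
  simp [spinMonomial, SzProd]

lemma SzProd_eq_spinMonomial (s : Finset (Fin N)) :
    SzProd N s = spinMonomial ((↑) : s → Fin N) := by
  rw [show ((↑) : s → Fin N) = Function.Embedding.subtype (· ∈ s) from rfl, spinMonomial_embedding]
  congr
  ext j
  simp

lemma isHermitian_SzProd (s : Finset (Fin N)) : (SzProd N s).IsHermitian := by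
  rw [SzProd_eq_spinMonomial]
  exact isHermitian_spinMonomial _

lemma SzProd_mul_self (s : Finset (Fin N)) : SzProd N s * SzProd N s = 1 := by
  rw [SzProd_eq_spinMonomial]
  exact spinMonomial_mul_self _

lemma Sx_comm_apply (j : Fin N) (σ τ : Conf N) : Sx N j σ τ = Sx N j τ σ := by
  have (σ τ : Conf N) (h : τ = Function.update σ j (1 - σ j)) :
    σ = Function.update τ j (1 - τ j) := by simp [h]
  simp only [Sx, of_apply]
  congr 1
  exact propext ⟨this σ τ, this τ σ⟩

lemma isHermitian_Sx (j : Fin N) : (Sx N j).IsHermitian := by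
  ext σ τ
  rw [conjTranspose_apply, Sx_comm_apply, Sx, of_apply]
  split_ifs <;> simp

lemma Sx_mul_self (j : Fin N) : Sx N j * Sx N j = 1 := by
  ext σ τ
  rw [mul_apply, Finset.sum_eq_single (Function.update σ j (1 - σ j))]
  · simp [Sx, one_apply, eq_comm]
  · intro ρ _ hρ
    simp [Sx, hρ]
  · simp

lemma prod_sign_update (s : Finset (Fin N)) (σ : Conf N) (j : Fin N) :
    ∏ k ∈ s, (if Function.update σ j (1 - σ j) k = 0 then (1 : ℂ) else -1) =
      (if j ∈ s then -1 else 1) * ∏ k ∈ s, (if σ k = 0 then (1 : ℂ) else -1) := by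
  have hsign (k : Fin N) : (if Function.update σ j (1 - σ j) k = 0 then (1 : ℂ) else -1) =
      (if j = k then -1 else 1) * if σ k = 0 then 1 else -1 := by
    obtain rfl | hjk := eq_or_ne j k
    · rw [Function.update_self]
      generalize σ j = a
      fin_cases a <;> simp
    · rw [Function.update_of_ne hjk.symm, if_neg hjk, one_mul]
  simp only [hsign, Finset.prod_mul_distrib, Finset.prod_ite_eq]

lemma SzProd_mul_Sx (s : Finset (Fin N)) (j : Fin N) :
    SzProd N s * Sx N j = if j ∈ s then -(Sx N j * SzProd N s) else Sx N j * SzProd N s := by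
  have hentry (σ τ : Conf N) : (SzProd N s * Sx N j) σ τ =
      (if j ∈ s then -1 else 1) * (Sx N j * SzProd N s) σ τ := by
    rw [SzProd, diagonal_mul, mul_diagonal]
    by_cases hτ : τ = Function.update σ j (1 - σ j)
    · rw [hτ, prod_sign_update]
      split_ifs <;> ring
    · simp [Sx, hτ]
  ext σ τ
  rw [hentry]
  split_ifs <;> simp

lemma lie_lie_Sx_SzProd (s : Finset (Fin N)) (j : Fin N) :
    ⁅⁅Sx N j, SzProd N s⁆, SzProd N s⁆ = if j ∈ s then (4 : ℕ) • Sx N j else 0 := by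
  have hcomm := SzProd_mul_Sx s j
  split_ifs at hcomm ⊢
  · exact lie_lie_of_mul_self_eq_one_of_anticommute (SzProd_mul_self s) hcomm
  · rw [Ring.lie_def (Sx N j), ← hcomm, sub_self, zero_lie]

lemma SzProd_lie_SzProd (s t : Finset (Fin N)) : ⁅SzProd N s, SzProd N t⁆ = 0 := by
  rw [Ring.lie_def, sub_eq_zero, SzProd, SzProd, diagonal_mul_diagonal, diagonal_mul_diagonal]
  simp only [mul_comm]

/-- The index set of the couplings of the `p`-spin model. -/
abbrev Hyperedge (N p : ℕ) : Type := {s : Finset (Fin N) // s.card = p}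

/-- The exponent `θ ∑ₛ xₛ S^z_s + h ∑ⱼ S^x_j` of the Gibbs state. With `θ = βJ √(p! / (2N^{p-1}))`
and `h = βb` it is `-βH_N`, as a function of the couplings `x`. -/
def pSpinExponent (θ h : ℝ) (x : Hyperedge N p → ℝ) : Matrix (Conf N) (Conf N) ℂ :=
  ∑ s, (θ * x s) • SzProd N s.1 + ∑ j, h • Sx N j

lemma isHermitian_pSpinExponent (θ h : ℝ) (x : Hyperedge N p → ℝ) :
    (pSpinExponent θ h x).IsHermitian :=
  IsHermitian.add
    (isSelfAdjoint_sum _ fun s _ ↦ (isHermitian_SzProd s.1).smul (IsSelfAdjoint.all (θ * x s)))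
    (isSelfAdjoint_sum _ fun j _ ↦ (isHermitian_Sx j).smul (IsSelfAdjoint.all h))

lemma continuous_pSpinExponent (θ h : ℝ) :
    Continuous (pSpinExponent θ h : (Hyperedge N p → ℝ) → _) := by
  unfold pSpinExponent
  fun_prop

lemma pSpinExponent_update (θ h : ℝ) (x : Hyperedge N p → ℝ) (s : Hyperedge N p) (t : ℝ) :
    pSpinExponent θ h (Function.update x s t) =
      pSpinExponent θ h x + (θ * (t - x s)) • SzProd N s.1 := by
  have hupdate : Function.update x s t = x + Pi.single s (t - x s) := by
    ext u
    obtain rfl | hu := eq_or_ne u s <;> simp [*]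
  simp only [pSpinExponent, hupdate, Pi.add_apply, mul_add, add_smul, Finset.sum_add_distrib,
    Pi.single_apply, mul_ite, mul_zero, ite_smul, zero_smul, Finset.sum_ite_eq', Finset.mem_univ,
    if_true]
  abel

lemma lie_lie_pSpinExponent (θ h : ℝ) (x : Hyperedge N p → ℝ) (s : Finset (Fin N)) :
    ⁅⁅pSpinExponent θ h x, SzProd N s⁆, SzProd N s⁆ = (4 * h) • ∑ j ∈ s, Sx N j := by
  simp only [pSpinExponent, add_lie, sum_lie, smul_lie, SzProd_lie_SzProd, lie_lie_Sx_SzProd,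
    smul_zero, Finset.sum_const_zero, zero_add, ← Finset.smul_sum, Finset.sum_ite_mem,
    Finset.univ_inter]
  module

end PSpin

section PermutationSymmetry

variable {N p : ℕ}

/-- The automorphism of the spin algebra that moves spin `j` to spin `π j`. -/
def permuteSpins (π : Equiv.Perm (Fin N)) :
    Matrix (Conf N) (Conf N) ℂ ≃ₐ[ℂ] Matrix (Conf N) (Conf N) ℂ :=
  reindexAlgEquiv ℂ ℂ (π.arrowCongr (.refl (Fin 2)))

lemma permuteSpins_apply (π : Equiv.Perm (Fin N)) (A : Matrix (Conf N) (Conf N) ℂ) (σ τ : Conf N) :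
    permuteSpins π A σ τ = A (σ ∘ π) (τ ∘ π) := rfl

lemma trace_permuteSpins (π : Equiv.Perm (Fin N)) (A : Matrix (Conf N) (Conf N) ℂ) :
    (permuteSpins π A).trace = A.trace :=
  Equiv.sum_comp (π.arrowCongr (.refl (Fin 2))).symm fun σ ↦ A σ σ

lemma permuteSpins_Sx (π : Equiv.Perm (Fin N)) (j : Fin N) :
    permuteSpins π (Sx N j) = Sx N (π j) := by
  ext σ τ
  have hflip : Function.update (σ ∘ π) j (1 - (σ ∘ π) j) =
      Function.update σ (π j) (1 - σ (π j)) ∘ π := by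
    rw [Function.update_comp_equiv, Equiv.symm_apply_apply, Function.comp_apply]
  simp only [permuteSpins_apply, Sx, of_apply, hflip, π.surjective.injective_comp_right.eq_iff]

lemma permuteSpins_SzProd (π : Equiv.Perm (Fin N)) (s : Finset (Fin N)) :
    permuteSpins π (SzProd N s) = SzProd N (s.map π.toEmbedding) := by
  ext σ τ
  simp [permuteSpins_apply, SzProd, diagonal_apply, π.surjective.injective_comp_right.eq_iff]

/-- The permutation of the index set of the couplings induced by a permutation of the spins. -/
def permuteHyperedges (π : Equiv.Perm (Fin N)) : Equiv.Perm (Hyperedge N p) :=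
  π.finsetCongr.subtypeEquiv fun s ↦ by simp

lemma permuteSpins_pSpinExponent (π : Equiv.Perm (Fin N)) (θ h : ℝ) (x : Hyperedge N p → ℝ) :
    permuteSpins π (pSpinExponent θ h (x ∘ permuteHyperedges π)) = pSpinExponent θ h x := by
  have hsmul (c : ℝ) (A : Matrix (Conf N) (Conf N) ℂ) :
      permuteSpins π (c • A) = c • permuteSpins π A := rfl
  simp only [pSpinExponent, map_add, map_sum, hsmul, permuteSpins_Sx, permuteSpins_SzProd]
  congr 1
  · exact Equiv.sum_comp (permuteHyperedges π) fun s ↦ (θ * x s) • SzProd N s.1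
  · exact Equiv.sum_comp π fun j ↦ h • Sx N j

/-- The law of the disorder: independent standard Gaussian couplings. -/
abbrev disorderLaw (N p : ℕ) : Measure (Hyperedge N p → ℝ) :=
  .pi fun _ ↦ gaussianReal 0 1

lemma integral_gibbsMean_Sx (θ h : ℝ) (j k : Fin N) :
    ∫ x, gibbsMean (pSpinExponent θ h x) (Sx N j) ∂disorderLaw N p =
      ∫ x, gibbsMean (pSpinExponent θ h x) (Sx N k) ∂disorderLaw N p := by
  let π := Equiv.swap j k
  have hlaw := measurePreserving_arrowCongr' (fun _ ↦ gaussianReal 0 1) (fun _ ↦ gaussianReal 0 1)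
    (permuteHyperedges (p := p) π).symm (.refl ℝ) fun _ ↦ .id _
  rw [← hlaw.integral_comp' (g := fun x ↦ gibbsMean (pSpinExponent θ h x) (Sx N j))]
  refine integral_congr_ae (.of_forall fun x ↦ ?_)
  change gibbsMean (pSpinExponent θ h (x ∘ permuteHyperedges π)) (Sx N j) = _
  rw [← gibbsMean_map (permuteSpins π) (trace_permuteSpins π), permuteSpins_pSpinExponent,
    permuteSpins_Sx, Equiv.swap_apply_left]

end PermutationSymmetry

section ReplicaOverlap

variable {N p : ℕ} {X : Matrix (Conf N) (Conf N) ℂ}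

lemma RN_pow (N p : ℕ) :
    RN N ^ p = ((N : ℝ)⁻¹ ^ p) • ∑ f : Fin p → Fin N, spinMonomial f ⊗ₖ spinMonomial f := by
  have hsum {ι : Type} [Fintype ι] (d : ι → Conf N × Conf N → ℂ) :
      ∑ i, diagonal (d i) = diagonal (∑ i, d i) :=
    (map_sum (diagonalAddMonoidHom _ ℂ) d _).symm
  simp only [RN, smul_pow, Sz, spinMonomial, diagonal_kronecker_diagonal, hsum, diagonal_pow]
  congr 2
  funext σ
  simp only [Pi.pow_apply, Finset.sum_apply, Fintype.sum_pow, Finset.prod_mul_distrib]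

lemma gibbsMean_RN_pow (hX : X.IsHermitian) (p : ℕ) :
    gibbsMean (X ⊗ₖ (1 : Matrix (Conf N) (Conf N) ℂ) + (1 : Matrix (Conf N) (Conf N) ℂ) ⊗ₖ X)
      (RN N ^ p) = (N : ℝ)⁻¹ ^ p * ∑ f : Fin p → Fin N, gibbsMean X (spinMonomial f) ^ 2 := by
  simp only [RN_pow, map_smul, map_sum, gibbsMean_kronecker hX (isHermitian_spinMonomial _),
    smul_eq_mul, sq]

lemma sum_sq_gibbsMean_SzProd_le (X : Matrix (Conf N) (Conf N) ℂ) :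
    p.factorial * ∑ s : Hyperedge N p, gibbsMean X (SzProd N s) ^ 2 ≤
      ∑ f : Fin p → Fin N, gibbsMean X (spinMonomial f) ^ 2 :=
  calc _ = ∑ f : Fin p ↪ Fin N, gibbsMean X (spinMonomial f) ^ 2 := by
        simp only [spinMonomial_embedding]
        rw [sum_embedding_map fun s : Hyperedge N p ↦ gibbsMean X (SzProd N s) ^ 2, nsmul_eq_mul]
    _ = ∑ f ∈ Finset.univ.map ⟨fun f : Fin p ↪ Fin N ↦ (f : Fin p → Fin N), DFunLike.coe_injective⟩,
          gibbsMean X (spinMonomial f) ^ 2 := by rw [Finset.sum_map]; rfl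
    _ ≤ _ := Finset.sum_le_univ_sum_of_nonneg fun f ↦ sq_nonneg _

end ReplicaOverlap

section Hamiltonian

variable {N p : ℕ}

/-- The normalisation `√(p! / (2N^{p-1}))` of the couplings. -/
def couplingScale (N p : ℕ) : ℝ := √(p.factorial / (2 * (N : ℝ) ^ (p - 1)))

lemma sq_couplingScale (N p : ℕ) :
    couplingScale N p ^ 2 = p.factorial / (2 * (N : ℝ) ^ (p - 1)) :=
  Real.sq_sqrt (by positivity)

lemma UNp_eq (g : Finset (Fin N) → ℝ) :
    UNp N p g = -couplingScale N p • ∑ s : Hyperedge N p, g s • SzProd N s := by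
  rw [UNp, ← Finset.sum_filter,
    Finset.sum_subtype _ (p := fun s ↦ s.card = p) (by simp) fun s ↦ g s • SzProd N s]
  rfl

lemma neg_smul_HNp (β J b : ℝ) (g : Finset (Fin N) → ℝ) :
    (-β) • HNp N p J b g =
      pSpinExponent (β * J * couplingScale N p) (β * b) fun s : Hyperedge N p ↦ g s := by
  rw [HNp, UNp_eq, pSpinExponent]
  simp only [mul_smul, ← Finset.smul_sum]
  module

lemma gibbs_HNp (β J b : ℝ) (g : Finset (Fin N) → ℝ) (A : Matrix (Conf N) (Conf N) ℂ) :
    gibbs β (HNp N p J b g) A =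
      gibbsMean
        (pSpinExponent (β * J * couplingScale N p) (β * b) fun s : Hyperedge N p ↦ g s) A := by
  rw [← neg_smul_HNp]
  rfl

lemma gibbs_Hdup_RN_pow (β J b : ℝ) (g : Finset (Fin N) → ℝ) :
    gibbs β (Hdup N p J b g) (RN N ^ p) = (N : ℝ)⁻¹ ^ p * ∑ f : Fin p → Fin N,
      gibbsMean (pSpinExponent (β * J * couplingScale N p) (β * b) fun s : Hyperedge N p ↦ g s)
        (spinMonomial f) ^ 2 := by
  rw [← gibbsMean_RN_pow (isHermitian_pSpinExponent _ _ _), ← neg_smul_HNp, smul_kronecker,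
    kronecker_smul, ← smul_add]
  rfl

lemma gibbs_HNp_UNp (β J b : ℝ) (g : Finset (Fin N) → ℝ) :
    gibbs β (HNp N p J b g) (UNp N p g) = -couplingScale N p * ∑ s : Hyperedge N p, g s *
      gibbsMean (pSpinExponent (β * J * couplingScale N p) (β * b) fun s : Hyperedge N p ↦ g s)
        (SzProd N s) := by
  simp only [gibbs_HNp, UNp_eq, map_smul, map_sum, smul_eq_mul]

end Hamiltonian

section DisorderAverages

variable {N p : ℕ} {θ h : ℝ} {A : Matrix (Conf N) (Conf N) ℂ}

lemma continuous_gibbsMean_pSpinExponent (θ h : ℝ) (A : Matrix (Conf N) (Conf N) ℂ) :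
    Continuous fun x : Hyperedge N p → ℝ ↦ gibbsMean (pSpinExponent θ h x) A :=
  (continuousOn_gibbsMean A).comp_continuous (continuous_pSpinExponent θ h)
    (isHermitian_pSpinExponent θ h)

lemma integrable_gibbsMean_pSpinExponent (hA : A.IsHermitian) (hAA : A * A = 1) :
    Integrable (fun x ↦ gibbsMean (pSpinExponent θ h x) A) (disorderLaw N p) :=
  .of_bound (continuous_gibbsMean_pSpinExponent θ h A).aestronglyMeasurable 1
    (.of_forall fun x ↦ abs_gibbsMean_le_one (isHermitian_pSpinExponent θ h x) hA hAA)

lemma integrable_sq_gibbsMean_pSpinExponent (hA : A.IsHermitian) (hAA : A * A = 1) :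
    Integrable (fun x ↦ gibbsMean (pSpinExponent θ h x) A ^ 2) (disorderLaw N p) := by
  simp only [sq]
  exact (integrable_gibbsMean_pSpinExponent hA hAA).bdd_mul
    (continuous_gibbsMean_pSpinExponent θ h A).aestronglyMeasurable
    (.of_forall fun x ↦ abs_gibbsMean_le_one (isHermitian_pSpinExponent θ h x) hA hAA)

lemma integrable_mul_gibbsMean_pSpinExponent (hA : A.IsHermitian) (hAA : A * A = 1)
    (s : Hyperedge N p) :
    Integrable (fun x ↦ x s * gibbsMean (pSpinExponent θ h x) A) (disorderLaw N p) :=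
  (integrable_eval ((memLp_id_gaussianReal 1).integrable le_rfl)).mul_bdd
    (continuous_gibbsMean_pSpinExponent θ h A).aestronglyMeasurable
    (.of_forall fun x ↦ abs_gibbsMean_le_one (isHermitian_pSpinExponent θ h x) hA hAA)

lemma integrable_duhamelInner_pSpinExponent (hA : A.IsHermitian) (hAA : A * A = 1) :
    Integrable (fun x ↦ duhamelInner (pSpinExponent θ h x) A A) (disorderLaw N p) := by
  have hcont : Continuous fun x : Hyperedge N p → ℝ ↦ duhamelInner (pSpinExponent θ h x) A A :=
    (continuousOn_duhamelInner A A).comp_continuous (continuous_pSpinExponent θ h)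
      (isHermitian_pSpinExponent θ h)
  refine .of_bound hcont.aestronglyMeasurable 1 (.of_forall fun x ↦ ?_)
  have hX := isHermitian_pSpinExponent θ h x
  rw [Real.norm_of_nonneg (duhamelInner_self_nonneg hX hA), ← gibbsMean_one hX, ← hAA]
  exact duhamelInner_self_le hX hA

lemma hasDerivAt_gibbsMean_pSpinExponent_update (s : Hyperedge N p) (x : Hyperedge N p → ℝ) :
    HasDerivAt (fun t ↦ gibbsMean (pSpinExponent θ h (Function.update x s t)) (SzProd N s))
      (θ * (duhamelInner (pSpinExponent θ h x) (SzProd N s) (SzProd N s) -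
        gibbsMean (pSpinExponent θ h x) (SzProd N s) ^ 2)) (x s) := by
  have hgibbs := hasDerivAt_gibbsMean_add_smul (isHermitian_pSpinExponent θ h x)
    (isHermitian_SzProd s.1) (SzProd N s)
  have haffine : HasDerivAt (fun t ↦ θ * (t - x s)) θ (x s) := by
    simpa using ((hasDerivAt_id (x s)).sub_const (x s)).const_mul θ
  simp only [pSpinExponent_update]
  convert! hgibbs.comp_of_eq (x s) haffine (by simp) using 1
  ring

lemma integral_mul_gibbsMean_SzProd (θ h : ℝ) (s : Hyperedge N p) :
    ∫ x, x s * gibbsMean (pSpinExponent θ h x) (SzProd N s) ∂disorderLaw N p =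
      θ * (∫ x, duhamelInner (pSpinExponent θ h x) (SzProd N s) (SzProd N s) ∂disorderLaw N p -
        ∫ x, gibbsMean (pSpinExponent θ h x) (SzProd N s) ^ 2 ∂disorderLaw N p) := by
  have hherm := isHermitian_SzProd s.1
  have hsq := SzProd_mul_self s.1
  have hD := integrable_duhamelInner_pSpinExponent (p := p) (θ := θ) (h := h) hherm hsq
  have hF := integrable_sq_gibbsMean_pSpinExponent (p := p) (θ := θ) (h := h) hherm hsq
  have hparts := integral_sub_mul_pi_gaussianReal (fun _ : Hyperedge N p ↦ 0) (fun _ ↦ 1)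
    one_ne_zero (hasDerivAt_gibbsMean_pSpinExponent_update (θ := θ) (h := h) s)
    (integrable_gibbsMean_pSpinExponent hherm hsq)
    (by simpa using integrable_mul_gibbsMean_pSpinExponent hherm hsq s)
    ((hD.sub hF).const_mul θ)
  rw [← integral_sub hD hF, ← integral_const_mul]
  simpa using hparts

/-- The Falk–Bruch inequality for the disorder averages: convexity of `Φ` moves the average inside
`Φ`, where the double commutator reduces to the transverse magnetisation. -/
lemma IsFalkBruch.apply_integral_gibbsMean_Sx_le {Φ : ℝ → ℝ} (hΦ : IsFalkBruch Φ) (θ h : ℝ)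
    (s : Hyperedge N p) (j : Fin N) :
    Φ (p * h * ∫ x, gibbsMean (pSpinExponent θ h x) (Sx N j) ∂disorderLaw N p) ≤
      ∫ x, duhamelInner (pSpinExponent θ h x) (SzProd N s) (SzProd N s) ∂disorderLaw N p := by
  let u (x : Hyperedge N p → ℝ) : ℝ := h * ∑ k ∈ s.1, gibbsMean (pSpinExponent θ h x) (Sx N k)
  have hX (x : Hyperedge N p → ℝ) := isHermitian_pSpinExponent θ h x
  have hS := isHermitian_SzProd s.1
  have hlie (x) : gibbsMean (pSpinExponent θ h x) ⁅⁅pSpinExponent θ h x, SzProd N s⁆, SzProd N s⁆ =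
      4 * u x := by
    rw [lie_lie_pSpinExponent, map_smul, map_sum, smul_eq_mul, mul_assoc]
  have hu (x) : 0 ≤ u x := by
    linarith [hlie x, gibbsMean_lie_lie_nonneg (hX x) hS]
  have hSx (k : Fin N) : Integrable (fun x ↦ gibbsMean (pSpinExponent θ h x) (Sx N k))
      (disorderLaw N p) := integrable_gibbsMean_pSpinExponent (isHermitian_Sx k) (Sx_mul_self k)
  have hpoint (x) : Φ (u x) ≤ duhamelInner (pSpinExponent θ h x) (SzProd N s) (SzProd N s) := by
    have hFB := hΦ.gibbsMean_mul_apply_le_duhamelInner (hX x) hS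
    rwa [SzProd_mul_self, gibbsMean_one (hX x), hlie, one_mul, mul_one,
      mul_div_cancel_left₀ _ four_ne_zero] at hFB
  have hmean : ∫ x, u x ∂disorderLaw N p =
      p * h * ∫ x, gibbsMean (pSpinExponent θ h x) (Sx N j) ∂disorderLaw N p := by
    rw [integral_const_mul, integral_finsetSum _ fun k _ ↦ hSx k,
      Finset.sum_congr rfl fun k _ ↦ integral_gibbsMean_Sx θ h k j, Finset.sum_const, s.2,
      nsmul_eq_mul]
    ring
  have hucont : Continuous u := continuous_const.mul
    (continuous_finsetSum _ fun k _ ↦ continuous_gibbsMean_pSpinExponent θ h _)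
  have hΦu : Integrable (Φ ∘ u) (disorderLaw N p) :=
    .of_bound (hΦ.continuousOn.comp_continuous hucont hu).aestronglyMeasurable 1
      (.of_forall fun x ↦ by
        rw [Function.comp_apply, Real.norm_of_nonneg (hΦ.nonneg (hu x))]
        exact hΦ.le_one (hu x))
  calc _ = Φ (∫ x, u x ∂disorderLaw N p) := by rw [hmean]
    _ ≤ ∫ x, Φ (u x) ∂disorderLaw N p := hΦ.convexOn.map_integral_le hΦ.continuousOn isClosed_Ici
        (.of_forall hu) ((integrable_finsetSum _ fun k _ ↦ hSx k).const_mul h) hΦu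
    _ ≤ _ := integral_mono hΦu
        (integrable_duhamelInner_pSpinExponent hS (SzProd_mul_self s.1)) hpoint

end DisorderAverages

section FiniteVolume

variable {N p : ℕ} {Ω : Type*} [MeasurableSpace Ω] {μ : Measure Ω} {g : Ω → Finset (Fin N) → ℝ}

lemma alphaP_eq (hpN : p ≤ N) : alphaP N p = p.factorial / (N : ℝ) ^ p * N.choose p := by
  rw [alphaP, ← Nat.choose_mul_factorial_mul_factorial hpN]
  push_cast
  field_simp

lemma le_integral_gibbs_Hdup_RN_pow (β J b : ℝ)
    (hg : HasLaw (fun ω (s : Hyperedge N p) ↦ g ω s) (disorderLaw N p) μ) :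
    p.factorial / (N : ℝ) ^ p * ∑ s : Hyperedge N p,
      ∫ x, gibbsMean (pSpinExponent (β * J * couplingScale N p) (β * b) x) (SzProd N s) ^ 2
        ∂disorderLaw N p ≤
      ∫ ω, gibbs β (Hdup N p J b (g ω)) (RN N ^ p) ∂μ := by
  have hSz (s : Hyperedge N p) := integrable_sq_gibbsMean_pSpinExponent (p := p)
    (θ := β * J * couplingScale N p) (h := β * b) (isHermitian_SzProd s.1) (SzProd_mul_self s.1)
  have hf (f : Fin p → Fin N) := integrable_sq_gibbsMean_pSpinExponent (p := p)
    (θ := β * J * couplingScale N p) (h := β * b) (isHermitian_spinMonomial f)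
    (spinMonomial_mul_self f)
  have hRint := (integrable_finsetSum Finset.univ fun f _ ↦ hf f).const_mul ((N : ℝ)⁻¹ ^ p)
  simp only [gibbs_Hdup_RN_pow]
  refine le_of_le_of_eq ?_ (hg.integral_comp hRint.aestronglyMeasurable).symm
  rw [← integral_finsetSum _ fun s _ ↦ hSz s, ← integral_const_mul]
  refine integral_mono ((integrable_finsetSum _ fun s _ ↦ hSz s).const_mul _) hRint fun x ↦ ?_
  simp only [div_eq_inv_mul, ← inv_pow, mul_assoc]
  exact mul_le_mul_of_nonneg_left (sum_sq_gibbsMean_SzProd_le _) (by positivity)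

lemma integral_gibbs_HNp_Sx (β J b : ℝ)
    (hg : HasLaw (fun ω (s : Hyperedge N p) ↦ g ω s) (disorderLaw N p) μ) (j : Fin N) :
    ∫ ω, gibbs β (HNp N p J b (g ω)) (Sx N j) ∂μ =
      ∫ x, gibbsMean (pSpinExponent (β * J * couplingScale N p) (β * b) x) (Sx N j)
        ∂disorderLaw N p := by
  simp only [gibbs_HNp]
  exact hg.integral_comp (continuous_gibbsMean_pSpinExponent _ _ _).aestronglyMeasurable

lemma integral_gibbs_HNp_UNp (β J b : ℝ)
    (hg : HasLaw (fun ω (s : Hyperedge N p) ↦ g ω s) (disorderLaw N p) μ) :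
    ∫ ω, gibbs β (HNp N p J b (g ω)) (UNp N p (g ω)) ∂μ =
      -(β * J * couplingScale N p ^ 2) * ∑ s : Hyperedge N p,
        (∫ x, duhamelInner (pSpinExponent (β * J * couplingScale N p) (β * b) x)
            (SzProd N s) (SzProd N s) ∂disorderLaw N p -
          ∫ x, gibbsMean (pSpinExponent (β * J * couplingScale N p) (β * b) x) (SzProd N s) ^ 2
            ∂disorderLaw N p) := by
  have hmul (s : Hyperedge N p) := integrable_mul_gibbsMean_pSpinExponent
    (θ := β * J * couplingScale N p) (h := β * b) (isHermitian_SzProd s.1) (SzProd_mul_self s.1) s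
  have hUint := (integrable_finsetSum Finset.univ fun s _ ↦ hmul s).const_mul (-couplingScale N p)
  simp only [gibbs_HNp_UNp]
  refine (hg.integral_comp hUint.aestronglyMeasurable).trans ?_
  rw [integral_const_mul, integral_finsetSum _ fun s _ ↦ hmul s]
  simp only [integral_mul_gibbsMean_SzProd, ← Finset.mul_sum]
  ring

theorem stmt19_general (hp : p ≠ 0) (hpN : p ≤ N) {β J : ℝ} (hβ : β ≠ 0) (hJ : J ≠ 0) (b : ℝ)
    (hg : HasLaw (fun ω (s : Hyperedge N p) ↦ g ω s) (Measure.pi fun _ ↦ gaussianReal 0 1) μ)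
    {Φ : ℝ → ℝ} (hΦ : IsFalkBruch Φ) (j : Fin N) :
    0 ≤ (∫ ω, gibbs β (Hdup N p J b (g ω)) (RN N ^ p) ∂μ)
      - alphaP N p * Φ (p * β * b * ∫ ω, gibbs β (HNp N p J b (g ω)) (Sx N j) ∂μ)
      - 2 / (β * J * N) * ∫ ω, gibbs β (HNp N p J b (g ω)) (UNp N p (g ω)) ∂μ := by
  have hN : (N : ℝ) ≠ 0 := Nat.cast_ne_zero.2 (by omega)
  have hscale : 2 / (β * J * N) * (β * J * couplingScale N p ^ 2) =
      p.factorial / (N : ℝ) ^ p := by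
    obtain ⟨q, rfl⟩ := Nat.exists_eq_add_one_of_ne_zero hp
    rw [sq_couplingScale, Nat.add_sub_cancel, pow_succ']
    field_simp
  have hoverlap := le_integral_gibbs_Hdup_RN_pow β J b hg
  have hΦD := Finset.card_nsmul_le_sum Finset.univ _ _ fun (s : Hyperedge N p) _ ↦
    hΦ.apply_integral_gibbsMean_Sx_le (β * J * couplingScale N p) (β * b) s j
  rw [Finset.card_univ, Fintype.card_finset_len, Fintype.card_fin, nsmul_eq_mul,
    ← mul_assoc (p : ℝ)] at hΦD
  have hαΦ := mul_le_mul_of_nonneg_left hΦD (a := p.factorial / (N : ℝ) ^ p) (by positivity)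
  rw [integral_gibbs_HNp_UNp β J b hg, integral_gibbs_HNp_Sx β J b hg, alphaP_eq hpN, neg_mul,
    mul_neg, ← mul_assoc (2 / _), hscale, Finset.sum_sub_distrib]
  linarith

end FiniteVolume

lemma liminf_nonneg_of_eventually {α : Type*} {l : Filter α} {u : α → ℝ}
    (hu : ∀ᶠ a in l, 0 ≤ u a) : 0 ≤ Filter.liminf u l := by
  -- If the eventual lower bounds of `u` are unbounded, their `sSup` is the junk value `0`.
  rw [Filter.liminf_eq]
  exact Real.sSup_nonneg' ⟨0, hu, le_rfl⟩

theorem stmt19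
    {Ω : Type*} [MeasurableSpace Ω] (μ : Measure Ω) [IsProbabilityMeasure μ]
    (p : ℕ) (hp : 2 ≤ p)
    (β J b : ℝ) (hβ : 0 < β) (hJ : 0 < J) (hb : 0 ≤ b)
    (g : (N : ℕ) → Ω → Finset (Fin N) → ℝ)
    (hmeas : ∀ (N : ℕ) (s : Finset (Fin N)), Measurable fun ω => g N ω s)
    (hgauss : ∀ (N : ℕ) (s : Finset (Fin N)), s.card = p →
      Measure.map (fun ω => g N ω s) μ = gaussianReal 0 1)
    (hindep : ∀ N : ℕ, iIndepFun
      (fun (s : {t : Finset (Fin N) // t.card = p}) ω => g N ω s.1) μ)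
    (Φ : ℝ → ℝ) (hΦ : ∀ r : ℝ, 0 < r → Φ (r * Real.tanh r) = Real.tanh r / r)
    (hΦ0 : Φ 0 = 1) :
    0 ≤ Filter.liminf
      (fun N : ℕ =>
        (∫ ω, gibbs β (Hdup N p J b (g N ω)) (RN N ^ p) ∂μ)
          - alphaP N p * Φ ((p : ℝ) * β * b *
              (if h : 0 < N then
                ∫ ω, gibbs β (HNp N p J b (g N ω)) (Sx N ⟨0, h⟩) ∂μ
              else 0))
          - (2 / (β * J * (N : ℝ)))
              * ∫ ω, gibbs β (HNp N p J b (g N ω)) (UNp N p (g N ω)) ∂μ)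
      Filter.atTop := by
  refine liminf_nonneg_of_eventually ?_
  filter_upwards [Filter.eventually_ge_atTop p] with N hpN
  have hN : 0 < N := by omega
  rw [dif_pos hN]
  exact stmt19_general (by omega) hpN hβ.ne' hJ.ne' b
    ((hindep N).hasLaw_pi fun s ↦ ⟨(hmeas N s).aemeasurable, hgauss N s s.2⟩) ⟨hΦ0, hΦ⟩ ⟨0, hN⟩
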